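/- arXiv:1910.08572 — 2 statements merged into one kernel-verified Lean document; each statement's English description precedes it below -/
import Mathlib

section
/- Reality and bound for Evans sums: For every finite field F_q with q elements, every nontrivial additive character ψ : (F_q,+) → ℂˣ and every multiplicative character χ : F_q^× → ℂˣ, the Evans sum S(χ) = −(1/√q) Σ_{x ∈ F_q^×} χ(x) ψ(x − x⁻¹) is a real number satisfying |S(χ)| ≤ 2. -/
open Finset
open scoped Classical

/-- The Evans sum `S(χ) = −(1/√q) ∑_{x ∈ F_q^×} χ(x) ψ(x − x⁻¹)`. -/
noncomputable def evansSum {F : Type*} [Field F] [Fintype F]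
    (ψ : AddChar F ℂ) (χ : Fˣ →* ℂˣ) : ℂ :=
  -(1 / (Real.sqrt (Fintype.card F) : ℂ)) *
    ∑ x : Fˣ, (χ x : ℂ) * ψ ((x : F) - (x : F)⁻¹)

/-!
Completely multiplicative weights `Λ` on the monic polynomials over `F_q` have an `L`-series
`∑ Λ(f) T ^ deg f`. The weight `χ(∏ xᵢ) ψ(∑ (xᵢ + c / xᵢ))` of `∏ (X - xᵢ)` depends only on the two
highest and the two lowest coefficients, so its `L`-series is the polynomial
`1 + K T + χ(-c) q T ^ 2 = (1 - α T) (1 - β T)`, where `K = ∑ χ(x) ψ(x + c / x)`; by Newton's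
identities the lift of `K` to the extension of degree `n` is `-(α ^ n + β ^ n)`.

Stepanov's method, applied to the fibres of the trace of `a u ^ (q - 1) + b u ^ (1 - q)`, shows that
the lift to the extension of degree `2 n` is `O(q ^ n)`. As `|α β| ≤ q`, this forces
`|α|, |β| ≤ √q`, hence `|K| ≤ 2 √q`. The substitution `x ↦ -c / x` gives `χ(-c) * conj K = K`, which
for `c = -1` says that `K` is real.
-/

open Polynomial

section Stepanov

variable {k : Type*} [Field k]

theorem exists_ne_zero_sum_smul_eq_zero_of_degree_lt {ι : Type*} [Fintype ι] {Q : ι → k[X]} {N : ℕ}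
    (hQ : ∀ i, (Q i).degree < N) (hN : N < Fintype.card ι) :
    ∃ d : ι → k, d ≠ 0 ∧ ∑ i, d i • Q i = 0 := by
  have : FiniteDimensional k (degreeLT k N) := (degreeLTEquiv k N).symm.finiteDimensional
  have hdep : ¬LinearIndependent k Q := fun hli => by
    let Q' : ι → degreeLT k N := fun i => ⟨Q i, mem_degreeLT.2 (hQ i)⟩
    have hli' : LinearIndependent k Q' := LinearIndependent.of_comp (degreeLT k N).subtype hli
    have hcard := hli'.fintype_card_le_finrank
    rw [(degreeLTEquiv k N).finrank_eq, Module.finrank_fin_fun] at hcard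
    omega
  obtain ⟨d, hsum, i, hi⟩ := Fintype.not_linearIndependent_iff.1 hdep
  exact ⟨d, Function.ne_iff.2 ⟨i, hi⟩, hsum⟩

theorem linearIndependent_of_injective_natDegree {ι : Type*} [Finite ι] {A : ι → k[X]}
    (hA : ∀ i, A i ≠ 0) (hinj : Function.Injective fun i => (A i).natDegree) :
    LinearIndependent k A := by
  have := Fintype.ofFinite ι
  refine Fintype.linearIndependent_iff.2 fun d hd => ?_
  have hdisj : Set.Pairwise {i | i ∈ univ ∧ d i • A i ≠ 0}
      (Function.onFun (· ≠ ·) (degree ∘ fun i => d i • A i)) := by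
    rintro i ⟨-, hi⟩ j ⟨-, hj⟩ hij hdeg
    refine hij (hinj ?_)
    have := natDegree_eq_of_degree_eq hdeg
    rwa [natDegree_smul _ (left_ne_zero_of_smul hi),
      natDegree_smul _ (left_ne_zero_of_smul hj)] at this
  have hsup := degree_sum_eq_of_disjoint _ _ hdisj
  rw [hd, degree_zero, eq_comm, Finset.sup_eq_bot_iff] at hsup
  exact fun i => (smul_eq_zero.1 (degree_eq_bot.1 (hsup i (mem_univ i)))).resolve_right (hA i)

/-- The polynomial vanishing on `M` is `∑ σ⁻¹(dᵢ) Aᵢ`, where `∑ dᵢ Bᵢ = 0` is a nontrivial relation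
obtained by counting dimensions. -/
theorem card_le_of_mul_ringEquiv_eval_eq {ι : Type*} [Fintype ι] (σ : k ≃+* k) {A B : ι → k[X]}
    {D N : ℕ} (hA : LinearIndependent k A) (hAD : ∀ i, (A i).natDegree ≤ D)
    (hB : ∀ i, (B i).degree < N) (hN : N < Fintype.card ι) {M : Finset k} {w : k → k}
    (hw : ∀ u ∈ M, w u ≠ 0) (hAB : ∀ u ∈ M, ∀ i, w u * σ ((A i).eval u) = (B i).eval u) :
    #M ≤ D := by
  obtain ⟨d, hd, hdB⟩ := exists_ne_zero_sum_smul_eq_zero_of_degree_lt hB hN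
  set G : k[X] := ∑ i, σ.symm (d i) • A i with hG
  have hG0 : G ≠ 0 := fun h => hd <| funext fun i =>
    σ.symm.map_eq_zero_iff.1 (Fintype.linearIndependent_iff.1 hA _ h i)
  have hroot : ∀ u ∈ M, G.IsRoot u := fun u hu => by
    have : w u * σ (G.eval u) = 0 := calc
      w u * σ (G.eval u) = ∑ i, d i * (w u * σ ((A i).eval u)) := by
        simp only [hG, eval_finsetSum, eval_smul, smul_eq_mul, map_sum, map_mul,
          RingEquiv.apply_symm_apply, Finset.mul_sum, mul_left_comm]
      _ = (∑ i, d i • B i).eval u := by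
        simp only [hAB u hu, eval_finsetSum, eval_smul, smul_eq_mul]
      _ = 0 := by rw [hdB, eval_zero]
    exact σ.map_eq_zero_iff.1 ((mul_eq_zero.1 this).resolve_left (hw u hu))
  calc #M ≤ G.natDegree :=
        card_le_degree_of_subset_roots fun u hu => (mem_roots hG0).2 (hroot u hu)
    _ ≤ D := natDegree_sum_le_of_forall_le _ _ fun i _ => (natDegree_smul_le _ _).trans (hAD i)

theorem injective_mixed_radix_of_coprime {I q s m : ℕ} (hmq : m.Coprime q) :
    Function.Injective fun x : Fin I × Fin q × Fin s =>
      (x.2.2 + s * (q * x.1 + m * x.2.1) : ℕ) := by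
  rintro ⟨i, b, j⟩ ⟨i', b', j'⟩ h
  simp only at h
  have hj : (j : ℕ) = j' := by
    simpa only [Nat.add_mul_mod_self_left, Nat.mod_eq_of_lt j.2, Nat.mod_eq_of_lt j'.2]
      using congrArg (· % s) h
  have hib : q * i + m * b = q * i' + m * (b' : ℕ) :=
    Nat.eq_of_mul_eq_mul_left j.pos (by omega)
  have hb : (b : ℕ) = b' := by
    have hmod : m * b ≡ m * b' [MOD q] := by
      simpa only [Nat.ModEq, Nat.mul_add_mod] using congrArg (· % q) hib
    exact (hmod.cancel_left_of_coprime hmq.symm).eq_of_lt_of_lt b.2 b'.2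
  have hi : (i : ℕ) = i' :=
    Nat.eq_of_mul_eq_mul_left b.pos (by rw [hb] at hib; exact Nat.add_right_cancel hib)
  simp only [Prod.mk.injEq, Fin.ext_iff]
  exact ⟨hi, hb, hj⟩

variable {q s m r : ℕ} {P H : k[X]}

theorem natDegree_X_pow_mul_pow (hr : r = q * s) (hP : P.natDegree = m * s) (hP0 : P ≠ 0)
    (i b j : ℕ) : (X ^ (j + r * i) * P ^ b).natDegree = j + s * (q * i + m * b) := by
  rw [natDegree_mul (pow_ne_zero _ X_ne_zero) (pow_ne_zero _ hP0), natDegree_X_pow, natDegree_pow,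
    hP, hr]
  ring

theorem degree_X_pow_mul_pow_lt (hH : H.natDegree ≤ 2 * r) {I i b j : ℕ} (hi : i < I) (hb : b < q)
    (hj : j < s) :
    (X ^ (r * j + i + r * (q - b)) * H ^ b).degree < ((r * s + I + 2 * r * q : ℕ) : WithBot ℕ) := by
  have hdeg : (X ^ (r * j + i + r * (q - b)) * H ^ b).natDegree
      ≤ r * j + i + r * (q - b) + b * (2 * r) :=
    natDegree_mul_le.trans <| Nat.add_le_add (natDegree_X_pow_le _)
      (natDegree_pow_le.trans (Nat.mul_le_mul_left b hH))
  refine (degree_le_of_natDegree_le hdeg).trans_lt (Nat.cast_lt.2 ?_)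
  obtain ⟨c, rfl⟩ := Nat.exists_eq_add_of_lt hb
  rw [show b + c + 1 - b = c + 1 by omega]
  nlinarith [Nat.mul_le_mul_left r hj.le]

theorem pow_mul_eval_X_pow_mul_pow {u : k} (hu : u ^ (r * r) = u)
    (hPH : u ^ r * P.eval u ^ r = H.eval u) {b : ℕ} (hb : b ≤ q) (i j : ℕ) :
    u ^ (r * q) * (X ^ (j + r * i) * P ^ b).eval u ^ r =
      (X ^ (r * j + i + r * (q - b)) * H ^ b).eval u := by
  have hq : u ^ (r * q) = u ^ (r * (q - b)) * u ^ (r * b) := by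
    rw [← pow_add, ← mul_add, Nat.sub_add_cancel hb]
  have hi : (u ^ (r * i)) ^ r = u ^ i := by
    rw [← pow_mul, mul_right_comm, pow_mul, hu]
  simp only [eval_mul, eval_pow, eval_X, ← hPH, hq, mul_pow, pow_add, hi]
  ring

/-- Stepanov's method with the auxiliary polynomials `X ^ (j + r * i) * P ^ b`: on the solutions of
the equation, the `r`-th power of such a polynomial agrees up to the factor `u ^ (r * q)` with a
polynomial of much smaller degree. -/
theorem card_le_of_pow_mul_eval_pow_eq (σ : k ≃+* k) (hσ : ∀ x, σ x = x ^ r) (hr : r = q * s)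
    (hq : 2 ≤ q) (hs : 4 ≤ s) (hmq : m.Coprime q) (hm : m ≤ 2 * q) (hP : P.natDegree = m * s)
    (hH : H.natDegree ≤ 2 * r) {M : Finset k} (hM0 : ∀ u ∈ M, u ≠ 0)
    (hM : ∀ u ∈ M, u ^ (r * r) = u) (hPH : ∀ u ∈ M, u ^ r * P.eval u ^ r = H.eval u) :
    #M ≤ r * s + 5 * q * r := by
  have hm0 : 0 < m := Nat.pos_of_ne_zero fun h => by simp [h] at hmq; omega
  have hP0 : P ≠ 0 := ne_zero_of_natDegree_gt (n := 0) (hP ▸ by positivity)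
  set I := s + 3 * q with hI
  let A : Fin I × Fin q × Fin s → k[X] := fun x => X ^ (x.2.2 + r * x.1 : ℕ) * P ^ (x.2.1 : ℕ)
  let B : Fin I × Fin q × Fin s → k[X] := fun x =>
    X ^ (r * x.2.2 + x.1 + r * (q - x.2.1) : ℕ) * H ^ (x.2.1 : ℕ)
  have hdegA (x) : (A x).natDegree = x.2.2 + s * (q * x.1 + m * x.2.1) :=
    natDegree_X_pow_mul_pow hr hP hP0 _ _ _
  refine card_le_of_mul_ringEquiv_eval_eq σ (A := A) (B := B) (N := r * s + I + 2 * r * q)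
    (w := fun u => u ^ (r * q)) ?_ (fun x => ?_)
    (fun x => degree_X_pow_mul_pow_lt hH x.1.2 x.2.1.2 x.2.2.2) ?_
    (fun u hu => pow_ne_zero _ (hM0 u hu)) ?_
  · refine linearIndependent_of_injective_natDegree
      (fun x => mul_ne_zero (pow_ne_zero _ X_ne_zero) (pow_ne_zero _ hP0)) ?_
    simpa only [hdegA] using injective_mixed_radix_of_coprime hmq
  · have hdeg : s * (q * x.1 + m * x.2.1) + s ≤ s * (q * (s + 3 * q) + 2 * q * q) := by
      have h1 : q * (x.1 + 1) ≤ q * (s + 3 * q) := Nat.mul_le_mul_left q x.1.2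
      have h2 : m * x.2.1 ≤ 2 * q * q := Nat.mul_le_mul hm x.2.1.2.le
      nlinarith
    calc (A x).natDegree ≤ s * (q * (s + 3 * q) + 2 * q * q) := by
          rw [hdegA]; have := x.2.2.2; omega
      _ = r * s + 5 * q * r := by rw [hr]; ring
  · simp only [Fintype.card_prod, Fintype.card_fin]
    have : I < q * r := by rw [hI, hr]; nlinarith [mul_le_mul hq hs (by norm_num) (by omega)]
    calc r * s + I + 2 * r * q < r * s + q * r + 2 * r * q := by omega
      _ = I * (q * s) := by rw [hI, hr]; ring
  · rintro u hu ⟨i, b, j⟩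
    rw [hσ]
    exact pow_mul_eval_X_pow_mul_pow (hM u hu) (hPH u hu) b.2.le i j

end Stepanov

section HalfTrace

variable {R : Type*} [CommSemiring R]

/-- The polynomial `X ^ q ^ (n + 1) * ∑ i ≤ n, (a * X ^ (q - 1) + b * X ^ (1 - q)) ^ q ^ i`, which
for a field of degree `2 * (n + 1)` over the field with `q` elements is a half of the trace of
`a * X ^ (q - 1) + b * X ^ (1 - q)`, cleared of denominators. -/
noncomputable def halfTracePoly (q n : ℕ) (a b : R) : R[X] :=
  ∑ i ∈ range (n + 1), (C (a ^ q ^ i) * X ^ (q ^ (n + 1) + (q - 1) * q ^ i) +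
    C (b ^ q ^ i) * X ^ (q ^ (n + 1) - (q - 1) * q ^ i))

theorem natDegree_halfTracePoly [NoZeroDivisors R] {q n : ℕ} {a b : R} (hq : 2 ≤ q) (ha : a ≠ 0) :
    (halfTracePoly q n a b).natDegree = (2 * q - 1) * q ^ n := by
  obtain ⟨d, rfl⟩ := Nat.exists_eq_add_of_le' (one_le_two.trans hq)
  have hd : 0 < d := by omega
  simp only [halfTracePoly, Nat.add_sub_cancel]
  set r := (d + 1) ^ (n + 1) with hr
  have hterm (i : ℕ) : (C (a ^ (d + 1) ^ i) * X ^ (r + d * (d + 1) ^ i) +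
      C (b ^ (d + 1) ^ i) * X ^ (r - d * (d + 1) ^ i)).natDegree = r + d * (d + 1) ^ i := by
    have hlead := natDegree_C_mul_X_pow (r + d * (d + 1) ^ i) _ (pow_ne_zero ((d + 1) ^ i) ha)
    have hpos : 0 < d * (d + 1) ^ i := by positivity
    rw [natDegree_add_eq_left_of_natDegree_lt, hlead]
    refine (natDegree_C_mul_X_pow_le _ _).trans_lt ?_
    omega
  have htail : (∑ i ∈ range n, (C (a ^ (d + 1) ^ i) * X ^ (r + d * (d + 1) ^ i) +
      C (b ^ (d + 1) ^ i) * X ^ (r - d * (d + 1) ^ i))).natDegree < r + d * (d + 1) ^ n := by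
    refine (natDegree_sum_le_of_forall_le (n := r + d * (d + 1) ^ n - 1) _ _
      fun i hi => ?_).trans_lt (Nat.sub_lt (by positivity) one_pos)
    have : d * (d + 1) ^ i < d * (d + 1) ^ n :=
      Nat.mul_lt_mul_of_pos_left (Nat.pow_lt_pow_right (by omega) (mem_range.1 hi)) hd
    rw [hterm]
    omega
  rw [sum_range_succ, natDegree_add_eq_right_of_natDegree_lt (by rwa [hterm]), hterm, hr,
    show 2 * (d + 1) - 1 = d + 1 + d by omega]
  ring

end HalfTrace

section Trace

variable {F R : Type*} [Field F] [Fintype F] [CommRing R] [Algebra F R]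

theorem frobeniusAlgHom_pow_apply (i : ℕ) (x : R) :
    (FiniteField.frobeniusAlgHom F R ^ i) x = x ^ Fintype.card F ^ i := by
  rw [AlgHom.coe_pow, FiniteField.coe_frobeniusAlgHom, pow_iterate]

theorem add_pow_card_pow (i : ℕ) (x y : R) :
    (x + y) ^ Fintype.card F ^ i = x ^ Fintype.card F ^ i + y ^ Fintype.card F ^ i := by
  simp only [← frobeniusAlgHom_pow_apply, map_add]

theorem sum_pow_card_pow {ι : Type*} (s : Finset ι) (f : ι → R) (i : ℕ) :
    (∑ j ∈ s, f j) ^ Fintype.card F ^ i = ∑ j ∈ s, f j ^ Fintype.card F ^ i := by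
  simp only [← frobeniusAlgHom_pow_apply, map_sum]

variable {K : Type*} [Field K] [Algebra F K]

theorem frobeniusAlgEquivOfAlgebraic_pow_apply [Algebra.IsAlgebraic F K] (i : ℕ) (x : K) :
    (FiniteField.frobeniusAlgEquivOfAlgebraic F K ^ i) x = x ^ Fintype.card F ^ i := by
  rw [AlgEquiv.coe_pow, FiniteField.coe_frobeniusAlgEquivOfAlgebraic_iterate]

theorem eval_halfTracePoly (n : ℕ) (a b : K) {u : K} (hu : u ≠ 0) :
    (halfTracePoly (Fintype.card F) n a b).eval u = u ^ Fintype.card F ^ (n + 1) *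
      ∑ i ∈ range (n + 1),
        (a * u ^ (Fintype.card F - 1) + b * (u ^ (Fintype.card F - 1))⁻¹) ^ Fintype.card F ^ i := by
  simp only [halfTracePoly, eval_finsetSum, eval_add, eval_mul, eval_C, eval_pow, eval_X,
    Finset.mul_sum]
  refine Finset.sum_congr rfl fun i hi => ?_
  have hle : (Fintype.card F - 1) * Fintype.card F ^ i ≤ Fintype.card F ^ (n + 1) := calc
    _ ≤ Fintype.card F * Fintype.card F ^ n :=
      Nat.mul_le_mul (Nat.sub_le _ _) (Nat.pow_le_pow_right Fintype.card_pos
        (Nat.lt_succ_iff.1 (mem_range.1 hi)))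
    _ = _ := (pow_succ' _ _).symm
  rw [add_pow_card_pow, pow_add, pow_sub₀ _ hu hle]
  simp only [mul_pow, inv_pow, pow_mul]
  ring

variable [Finite K]

theorem add_halfTrace_pow_eq_trace {n : ℕ} (hn : Module.finrank F K = 2 * n) (x : K) :
    ∑ i ∈ range n, x ^ Fintype.card F ^ i +
      (∑ i ∈ range n, x ^ Fintype.card F ^ i) ^ Fintype.card F ^ n =
        algebraMap F K (Algebra.trace F K x) := by
  rw [FiniteField.algebraMap_trace_eq_sum_pow, Nat.card_eq_fintype_card, hn, two_mul,
    Finset.sum_range_add, sum_pow_card_pow]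
  simp only [← pow_mul, ← pow_add, add_comm n]

theorem pow_card_pow_mul_self {n : ℕ} (hK : Module.finrank F K = 2 * n) (x : K) :
    x ^ (Fintype.card F ^ n * Fintype.card F ^ n) = x := by
  have := Fintype.ofFinite K
  rw [← pow_add, ← two_mul, ← hK, ← Module.card_eq_pow_finrank (K := F) (V := K),
    FiniteField.pow_card]

theorem pow_mul_eval_halfTracePoly_pow {n : ℕ} (hK : Module.finrank F K = 2 * (n + 1)) (a b : K)
    {u : K} (hu : u ≠ 0) :
    u ^ Fintype.card F ^ (n + 1) *
        (halfTracePoly (Fintype.card F) n a b).eval u ^ Fintype.card F ^ (n + 1) =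
      (C (algebraMap F K (Algebra.trace F K
          (a * u ^ (Fintype.card F - 1) + b * (u ^ (Fintype.card F - 1))⁻¹))) *
        X ^ (Fintype.card F ^ (n + 1) + 1) - X * halfTracePoly (Fintype.card F) n a b).eval u := by
  set g := a * u ^ (Fintype.card F - 1) + b * (u ^ (Fintype.card F - 1))⁻¹
  set τ := ∑ i ∈ range (n + 1), g ^ Fintype.card F ^ i
  have hP : (halfTracePoly (Fintype.card F) n a b).eval u = u ^ Fintype.card F ^ (n + 1) * τ :=
    eval_halfTracePoly n a b hu
  have hτ : τ ^ Fintype.card F ^ (n + 1) = algebraMap F K (Algebra.trace F K g) - τ :=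
    eq_sub_of_add_eq' (add_halfTrace_pow_eq_trace hK g)
  simp only [eval_sub, eval_mul, eval_C, eval_pow, eval_X, hP, mul_pow, ← pow_mul, hτ,
    pow_card_pow_mul_self hK]
  ring

end Trace

theorem card_filter_trace_eq_le {F K : Type*} [Field F] [Fintype F] [Field K] [Fintype K]
    [Algebra F K] {n : ℕ} (hK : Module.finrank F K = 2 * (n + 1))
    (hn : 2 ≤ n) {a : K} (ha : a ≠ 0) (b : K) (t : F) :
    #{u : Kˣ | Algebra.trace F K
        (a * (u : K) ^ (Fintype.card F - 1) + b * ((u : K) ^ (Fintype.card F - 1))⁻¹) = t} ≤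
      Fintype.card F ^ (n + 1) * Fintype.card F ^ n +
        5 * Fintype.card F * Fintype.card F ^ (n + 1) := by
  set q := Fintype.card F
  have hq : 2 ≤ q := Fintype.one_lt_card
  set r := q ^ (n + 1)
  set P := halfTracePoly q n a b
  have hr : r = q * q ^ n := pow_succ' q n
  have hcop : (2 * q - 1).Coprime q := by
    rw [show 2 * q - 1 = q - 1 + q by omega, Nat.coprime_add_self_left,
      Nat.coprime_self_sub_left (by omega)]
    exact Nat.coprime_one_left q
  have hP : P.natDegree = (2 * q - 1) * q ^ n := natDegree_halfTracePoly hq ha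
  have hs : 4 ≤ q ^ n := (Nat.pow_le_pow_left hq 2).trans (Nat.pow_le_pow_right (by omega) hn)
  have hH : (C (algebraMap F K t) * X ^ (r + 1) - X * P).natDegree ≤ 2 * r := by
    refine (natDegree_sub_le _ _).trans (max_le ((natDegree_C_mul_X_pow_le _ _).trans ?_)
      (natDegree_mul_le.trans ?_))
    · nlinarith
    · rw [natDegree_X, hP, Nat.sub_mul, hr, mul_assoc, one_mul]
      have : q ^ n ≤ 2 * (q * q ^ n) := by nlinarith
      omega
  rw [← Finset.card_map ⟨Units.val, Units.val_injective⟩]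
  refine card_le_of_pow_mul_eval_pow_eq (r := r)
    (FiniteField.frobeniusAlgEquivOfAlgebraic F K ^ (n + 1)).toRingEquiv
    (frobeniusAlgEquivOfAlgebraic_pow_apply (n + 1)) hr hq hs hcop (by omega) hP hH
    ?_ (fun u _ => pow_card_pow_mul_self hK u) ?_
  · simp only [Finset.mem_map]
    rintro _ ⟨u, -, rfl⟩
    exact u.ne_zero
  · simp only [Finset.mem_map, Finset.mem_filter, Finset.mem_univ, true_and]
    rintro _ ⟨u, rfl, rfl⟩
    exact pow_mul_eval_halfTracePoly_pow hK a b u.ne_zero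

theorem norm_mulChar_le_one {A : Type*} [CommRing A] [Finite Aˣ] (χ : MulChar A ℂ) (x : A) :
    ‖χ x‖ ≤ 1 := by
  have := Fintype.ofFinite Aˣ
  by_cases hx : IsUnit x
  · exact (Complex.norm_eq_one_of_mem_rootsOfUnity (χ.apply_mem_rootsOfUnity hx.unit)).le
  · rw [χ.map_nonunit hx, norm_zero]
    exact zero_le_one

section KloostermanSum

variable {F R : Type*} [Field F] [Fintype F] [CommRing R]

/-- The twisted Kloosterman sum `∑ x, χ x * ψ (x + c / x)`. The term at `x = 0` vanishes, because a
multiplicative character is extended by `χ 0 = 0`. -/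
def kloostermanSum (ψ : AddChar F R) (χ : MulChar F R) (c : F) : R :=
  ∑ x, χ x * ψ (x + c * x⁻¹)

theorem kloostermanSum_eq_sum_units (ψ : AddChar F R) (χ : MulChar F R) (c : F) :
    kloostermanSum ψ χ c = ∑ u : Fˣ, χ u * ψ (u + c * (u : F)⁻¹) := by
  refine (Fintype.sum_of_injective _ Units.val_injective _ _ (fun x hx => ?_) fun _ => rfl).symm
  rw [χ.map_nonunit hx, zero_mul]

/-- The factor `u ^ m` is invisible to `χ`, so averaging over `u` removes the multiplicative
character. -/
theorem norm_kloostermanSum_le_of_pow_eq_one {ψ : AddChar F ℂ} {χ : MulChar F ℂ} {c : F} {m : ℕ}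
    (hχ : χ ^ m = 1) {B : ℝ}
    (hB : ∀ a : Fˣ, ‖∑ u : Fˣ, ψ (a * u ^ m + c * (a * u ^ m : F)⁻¹)‖ ≤ B) :
    ‖kloostermanSum ψ χ c‖ ≤ B := by
  have hχu (u : Fˣ) : χ (u ^ m : F) = 1 := by
    rw [map_pow, ← MulChar.pow_apply_coe, hχ, MulChar.one_apply_coe]
  have htranslate (u : Fˣ) : kloostermanSum ψ χ c =
      ∑ a : Fˣ, χ a * ψ (a * u ^ m + c * (a * u ^ m : F)⁻¹) := by
    rw [kloostermanSum_eq_sum_units, ← Equiv.sum_comp (Equiv.mulRight (u ^ m))]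
    simp only [Equiv.coe_mulRight, Units.val_mul, Units.val_pow_eq_pow_val, map_mul, hχu, mul_one]
  have haverage : (Fintype.card Fˣ : ℂ) * kloostermanSum ψ χ c =
      ∑ a : Fˣ, χ a * ∑ u : Fˣ, ψ (a * u ^ m + c * (a * u ^ m : F)⁻¹) := by
    simp only [Finset.mul_sum]
    rw [Finset.sum_comm, ← Finset.sum_congr rfl fun u _ => htranslate u, Finset.sum_const,
      Finset.card_univ, nsmul_eq_mul]
  refine le_of_mul_le_mul_left ?_ (Nat.cast_pos.2 (Fintype.card_pos (α := Fˣ)) : (0 : ℝ) < _)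
  calc (Fintype.card Fˣ : ℝ) * ‖kloostermanSum ψ χ c‖
      = ‖∑ a : Fˣ, χ a * ∑ u : Fˣ, ψ (a * u ^ m + c * (a * u ^ m : F)⁻¹)‖ := by
        rw [← haverage, norm_mul, Complex.norm_natCast]
    _ ≤ ∑ _ : Fˣ, B := norm_sum_le_of_le _ fun a _ => by
        rw [norm_mul]
        exact (mul_le_of_le_one_left (norm_nonneg _) (norm_mulChar_le_one χ a)).trans (hB a)
    _ = Fintype.card Fˣ * B := by rw [Finset.sum_const, Finset.card_univ, nsmul_eq_mul]

end KloostermanSum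

theorem norm_sum_addChar_comp_le {G ι : Type*} [AddCommGroup G] [Fintype G] [Fintype ι]
    {ψ : AddChar G ℂ} (hψ : ψ ≠ 1) (g : ι → G) {B : ℕ} (hB : ∀ t, #{i | g i = t} ≤ B) :
    ‖∑ i, ψ (g i)‖ ≤ Fintype.card G * B - Fintype.card ι := by
  have hfiber : ∑ i, ψ (g i) = ∑ t, (#{i | g i = t} : ℂ) * ψ t := by
    rw [← Finset.sum_fiberwise univ g]
    refine Finset.sum_congr rfl fun t _ => ?_
    rw [← nsmul_eq_mul, ← Finset.sum_const]
    exact Finset.sum_congr rfl fun i hi => by rw [(mem_filter.1 hi).2]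
  have hcompl : ∑ i, ψ (g i) = -∑ t, ((B - #{i | g i = t} : ℝ) : ℂ) * ψ t := by
    simp only [hfiber, Complex.ofReal_sub, Complex.ofReal_natCast, sub_mul, sum_sub_distrib,
      ← Finset.mul_sum, AddChar.sum_eq_zero_of_ne_one hψ, mul_zero, zero_sub, neg_neg]
  have hcard : Fintype.card ι = ∑ t, #{i | g i = t} :=
    Finset.card_eq_sum_card_fiberwise fun _ _ => mem_univ _
  calc ‖∑ i, ψ (g i)‖ ≤ ∑ t, (B - #{i | g i = t} : ℝ) := by
        rw [hcompl, norm_neg]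
        refine norm_sum_le_of_le _ fun t _ => ?_
        rw [norm_mul, AddChar.norm_apply, mul_one, Complex.norm_real, Real.norm_of_nonneg]
        exact sub_nonneg.2 (Nat.cast_le.2 (hB t))
    _ = Fintype.card G * B - Fintype.card ι := by
        rw [sum_sub_distrib, Finset.sum_const, Finset.card_univ, nsmul_eq_mul, hcard, Nat.cast_sum]

section Lift

variable {F R : Type*} [Field F] [CommRing R] (K : Type*) [Field K] [Algebra F K]

/-- The additive character `ψ ∘ Tr` of an extension. -/
noncomputable def traceLift (ψ : AddChar F R) : AddChar K R :=
  ψ.compAddMonoidHom (Algebra.trace F K).toAddMonoidHom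

theorem traceLift_apply (ψ : AddChar F R) (x : K) :
    traceLift K ψ x = ψ (Algebra.trace F K x) := rfl

variable [FiniteDimensional F K]

/-- The multiplicative character `χ ∘ N` of an extension. -/
noncomputable def normLift (χ : MulChar F R) : MulChar K R where
  toMonoidHom := χ.toMonoidHom.comp (Algebra.norm F)
  map_nonunit' x hx := by
    rw [isUnit_iff_ne_zero, not_not] at hx
    exact hx ▸ (congrArg χ Algebra.norm_zero).trans χ.map_zero

theorem normLift_apply (χ : MulChar F R) (x : K) :
    normLift K χ x = χ (Algebra.norm F x) := rfl

theorem normLift_pow_eq_one {χ : MulChar F R} {m : ℕ} (hχ : χ ^ m = 1) :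
    normLift K χ ^ m = 1 := by
  ext u
  have hu : IsUnit (Algebra.norm F (u : K)) := u.isUnit.map _
  rw [MulChar.pow_apply_coe, normLift_apply, ← hu.unit_spec, ← MulChar.pow_apply_coe, hχ,
    MulChar.one_apply_coe, MulChar.one_apply_coe]

end Lift

theorem norm_kloostermanSum_lift_le {F K : Type*} [Field F] [Fintype F] [Field K] [Fintype K]
    [Algebra F K] {n : ℕ} (hK : Module.finrank F K = 2 * (n + 1)) (hn : 2 ≤ n) {ψ : AddChar F ℂ}
    (hψ : ψ ≠ 1) (χ : MulChar F ℂ) (c : K) :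
    ‖kloostermanSum (traceLift K ψ) (normLift K χ) c‖ ≤ 5 * (Fintype.card F : ℝ) ^ (n + 3) + 1 := by
  have hχ : χ ^ (Fintype.card F - 1) = 1 := by
    rw [← Fintype.card_units, MulChar.pow_card_eq_one]
  refine norm_kloostermanSum_le_of_pow_eq_one (normLift_pow_eq_one K hχ) fun a => ?_
  have hfiber (t : F) := card_filter_trace_eq_le hK hn a.ne_zero (c * (a : K)⁻¹) t
  simp only [traceLift_apply, mul_inv, ← mul_assoc]
  refine (norm_sum_addChar_comp_le hψ _ hfiber).trans_eq ?_
  rw [Fintype.card_units, Nat.cast_sub Fintype.card_pos,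
    Module.card_eq_pow_finrank (K := F) (V := K), hK]
  push_cast
  ring

section LSeries

open UniqueFactorizationMonoid

variable {F : Type*} [Field F]

theorem finite_setOf_monic_natDegree_eq [Finite F] (n : ℕ) :
    {f : F[X] | f.Monic ∧ f.natDegree = n}.Finite :=
  have : Finite (degreeLT F n) := .of_equiv _ (degreeLTEquiv F n).symm.toEquiv
  Set.finite_coe_iff.1 (.of_equiv _ (monicEquivDegreeLT n).symm)

theorem finite_setOf_monic_irreducible_natDegree_le [Finite F] (n : ℕ) :
    {P : F[X] | P.Monic ∧ Irreducible P ∧ P.natDegree ≤ n}.Finite :=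
  ((Set.finite_Iic n).biUnion fun d _ => finite_setOf_monic_natDegree_eq d).subset
    fun P hP => Set.mem_biUnion (x := P.natDegree) hP.2.2 ⟨hP.1, rfl⟩

variable (F) in
/-- The monic polynomials of degree `n` over a finite field. -/
noncomputable def monicOfDegree [Finite F] (n : ℕ) : Finset F[X] :=
  (finite_setOf_monic_natDegree_eq n).toFinset

variable (F) in
/-- The monic irreducible polynomials of degree at most `n` over a finite field. -/
noncomputable def monicIrreducibles [Finite F] (n : ℕ) : Finset F[X] :=
  (finite_setOf_monic_irreducible_natDegree_le n).toFinset

theorem mem_monicOfDegree [Finite F] {n : ℕ} {f : F[X]} :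
    f ∈ monicOfDegree F n ↔ f.Monic ∧ f.natDegree = n :=
  Set.Finite.mem_toFinset _

theorem mem_monicIrreducibles [Finite F] {n : ℕ} {P : F[X]} :
    P ∈ monicIrreducibles F n ↔ P.Monic ∧ Irreducible P ∧ P.natDegree ≤ n :=
  Set.Finite.mem_toFinset _

theorem sum_count_normalizedFactors_mul_natDegree [Finite F] {n : ℕ} {f : F[X]}
    (hf : f ∈ monicOfDegree F n) :
    ∑ P ∈ monicIrreducibles F n, (normalizedFactors f).count P * P.natDegree = n := by
  obtain ⟨hm, rfl⟩ := mem_monicOfDegree.1 hf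
  have hmem {P : F[X]} (hP : P ∈ normalizedFactors f) : P ∈ monicIrreducibles F f.natDegree := by
    obtain ⟨hi, hPm, hdvd⟩ := (Polynomial.mem_normalizedFactors_iff hm.ne_zero).1 hP
    exact mem_monicIrreducibles.2 ⟨hPm, hi, natDegree_le_of_dvd hdvd hm.ne_zero⟩
  have hdeg : f.natDegree = ((normalizedFactors f).map natDegree).sum := by
    conv_lhs => rw [← hm.normalize_eq_self, ← prod_normalizedFactors_eq hm.ne_zero]
    exact natDegree_multiset_prod_of_monic _ fun P hP => (mem_monicIrreducibles.1 (hmem hP)).1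
  rw [sum_multiset_map_count] at hdeg
  refine Eq.trans ?_ hdeg.symm
  refine (sum_subset (fun P hP => hmem (Multiset.mem_toFinset.1 hP)) fun P _ hP => ?_).symm
  rw [Multiset.count_eq_zero.2 (mt Multiset.mem_toFinset.2 hP), zero_mul]

theorem card_filter_pow_dvd {n : ℕ} {f P : F[X]} (hf : f ≠ 0) (hn : f.natDegree ≤ n)
    (hP : P.Monic) (hi : Irreducible P) :
    #{k ∈ Icc 1 n | P ^ k ∣ f} = (normalizedFactors f).count P := by
  have hdvd (k : ℕ) : P ^ k ∣ f ↔ k ≤ (normalizedFactors f).count P := by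
    rw [pow_dvd_iff_le_emultiplicity, emultiplicity_eq_count_normalizedFactors hi hf,
      hP.normalize_eq_self, Nat.cast_le]
  have hle : (normalizedFactors f).count P ≤ n := calc
    _ ≤ (normalizedFactors f).count P * P.natDegree := Nat.le_mul_of_pos_right _ hi.natDegree_pos
    _ = (P ^ (normalizedFactors f).count P).natDegree := natDegree_pow _ _ |>.symm
    _ ≤ n := (natDegree_le_of_dvd ((hdvd _).2 le_rfl) hf).trans hn
  have hfilter : {k ∈ Icc 1 n | P ^ k ∣ f} = Icc 1 ((normalizedFactors f).count P) := by
    ext k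
    simp only [Finset.mem_filter, Finset.mem_Icc, hdvd]
    omega
  rw [hfilter, Nat.card_Icc, Nat.add_sub_cancel]

theorem sum_filter_mul_le_eq_sum_filter_dvd {M : Type*} [AddCommMonoid M] {d : ℕ} (hd : 0 < d)
    (n : ℕ) (f : ℕ → ℕ → M) :
    ∑ k ∈ Icc 1 n with k * d ≤ n, f k (k * d) = ∑ j ∈ Icc 1 n with d ∣ j, f (j / d) j := by
  refine Finset.sum_nbij' (· * d) (· / d) ?_ ?_ (fun k _ => Nat.mul_div_cancel k hd)
    (fun j hj => Nat.div_mul_cancel (mem_filter.1 hj).2)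
    (fun k _ => by rw [Nat.mul_div_cancel k hd])
  all_goals simp only [Finset.mem_filter, Finset.mem_Icc]
  · exact fun k hk => ⟨⟨Nat.mul_pos hk.1.1 hd, hk.2⟩, Nat.dvd_mul_left d k⟩
  · rintro j ⟨⟨hj, hjn⟩, hdj⟩
    exact ⟨⟨Nat.div_pos (Nat.le_of_dvd hj hdj) hd, (Nat.div_le_self j d).trans hjn⟩,
      by rwa [Nat.div_mul_cancel hdj]⟩

variable [Finite F] {R : Type*} [CommSemiring R] (Λ : F[X] →* R)

/-- The coefficient of `T ^ n` in the `L`-series `∑ Λ(f) T ^ deg f`, where `f` runs over the monic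
polynomials. -/
noncomputable def lCoeff (n : ℕ) : R :=
  ∑ f ∈ monicOfDegree F n, Λ f

/-- The coefficient of `T ^ n` in the logarithmic derivative `T L'(T) / L(T)` of the `L`-series
`L(T) = ∏ (1 - Λ(P) T ^ deg P)⁻¹`, where `P` runs over the monic irreducible polynomials. -/
noncomputable def lPowerSum (n : ℕ) : R :=
  ∑ P ∈ monicIrreducibles F n with P.natDegree ∣ n, P.natDegree * Λ P ^ (n / P.natDegree)

theorem sum_multiples_eq_mul_lCoeff (n : ℕ) {g : F[X]} (hg : g.Monic) :
    ∑ f ∈ monicOfDegree F n with g ∣ f, Λ f =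
      if g.natDegree ≤ n then Λ g * lCoeff Λ (n - g.natDegree) else 0 := by
  split_ifs with h
  · rw [lCoeff, Finset.mul_sum]
    refine (Finset.sum_nbij (g * ·) (fun f hf => ?_) ((mul_right_injective₀ hg.ne_zero).injOn)
      ?_ (fun f _ => (map_mul Λ g f).symm)).symm
    · obtain ⟨hm, hdeg⟩ := mem_monicOfDegree.1 hf
      refine mem_filter.2 ⟨mem_monicOfDegree.2 ⟨hg.mul hm, ?_⟩, dvd_mul_right _ _⟩
      rw [hg.natDegree_mul hm, hdeg, Nat.add_sub_cancel' h]
    · rintro _ hf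
      obtain ⟨hf, f, rfl⟩ := mem_filter.1 hf
      obtain ⟨hgf, hdeg⟩ := mem_monicOfDegree.1 hf
      have hm := hg.of_mul_monic_left hgf
      rw [hg.natDegree_mul hm] at hdeg
      exact ⟨f, mem_monicOfDegree.2 ⟨hm, by omega⟩, rfl⟩
  · refine Finset.sum_eq_zero fun f hf => absurd ?_ h
    obtain ⟨hf, hdvd⟩ := mem_filter.1 hf
    obtain ⟨hm, rfl⟩ := mem_monicOfDegree.1 hf
    exact natDegree_le_of_dvd hdvd hm.ne_zero

theorem lPowerSum_eq_sum_of_le {j n : ℕ} (hj : 0 < j) (hjn : j ≤ n) :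
    lPowerSum Λ j =
      ∑ P ∈ monicIrreducibles F n with P.natDegree ∣ j, P.natDegree * Λ P ^ (j / P.natDegree) := by
  refine Finset.sum_congr ?_ fun _ _ => rfl
  ext P
  simp only [Finset.mem_filter, mem_monicIrreducibles]
  exact ⟨fun ⟨⟨hm, hi, hle⟩, hd⟩ => ⟨⟨hm, hi, hle.trans hjn⟩, hd⟩,
    fun ⟨⟨hm, hi, _⟩, hd⟩ => ⟨⟨hm, hi, Nat.le_of_dvd hj hd⟩, hd⟩⟩

/-- Newton's identities for the `L`-series: the equation `T L' = (T L' / L) * L`. Both sides count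
the triples of a monic `f` of degree `n`, an irreducible `P` and `k ≥ 1` with `P ^ k ∣ f`. -/
theorem natCast_mul_lCoeff (n : ℕ) :
    n * lCoeff Λ n = ∑ j ∈ Icc 1 n, lPowerSum Λ j * lCoeff Λ (n - j) := by
  have hdegree {f : F[X]} (hf : f ∈ monicOfDegree F n) :
      ∑ P ∈ monicIrreducibles F n, ∑ k ∈ Icc 1 n with P ^ k ∣ f, P.natDegree = n := by
    obtain ⟨hm, hdeg⟩ := mem_monicOfDegree.1 hf
    refine Eq.trans (Finset.sum_congr rfl fun P hP => ?_)
      (sum_count_normalizedFactors_mul_natDegree hf)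
    obtain ⟨hPm, hi, -⟩ := mem_monicIrreducibles.1 hP
    rw [Finset.sum_const, card_filter_pow_dvd hm.ne_zero hdeg.le hPm hi, smul_eq_mul]
  calc n * lCoeff Λ n
      = ∑ f ∈ monicOfDegree F n, ∑ P ∈ monicIrreducibles F n, ∑ k ∈ Icc 1 n with P ^ k ∣ f,
          P.natDegree * Λ f := by
        rw [lCoeff, Finset.mul_sum]
        refine Finset.sum_congr rfl fun f hf => ?_
        conv_lhs => rw [← hdegree hf]
        simp only [Nat.cast_sum, Finset.sum_mul]
    _ = ∑ P ∈ monicIrreducibles F n, ∑ k ∈ Icc 1 n,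
          P.natDegree * ∑ f ∈ monicOfDegree F n with P ^ k ∣ f, Λ f := by
        simp only [Finset.mul_sum, Finset.sum_filter, mul_ite, mul_zero]
        rw [Finset.sum_comm]
        exact Finset.sum_congr rfl fun P _ => Finset.sum_comm
    _ = ∑ P ∈ monicIrreducibles F n, ∑ k ∈ Icc 1 n with k * P.natDegree ≤ n,
          P.natDegree * Λ P ^ k * lCoeff Λ (n - k * P.natDegree) := by
        refine Finset.sum_congr rfl fun P hP => ?_
        have hPm := (mem_monicIrreducibles.1 hP).1
        rw [Finset.sum_filter]
        refine Finset.sum_congr rfl fun k _ => ?_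
        rw [sum_multiples_eq_mul_lCoeff Λ n (hPm.pow k), natDegree_pow, map_pow, mul_ite_zero,
          mul_assoc]
    _ = ∑ P ∈ monicIrreducibles F n, ∑ j ∈ Icc 1 n with P.natDegree ∣ j,
          P.natDegree * Λ P ^ (j / P.natDegree) * lCoeff Λ (n - j) :=
        Finset.sum_congr rfl fun P hP => sum_filter_mul_le_eq_sum_filter_dvd
          (mem_monicIrreducibles.1 hP).2.1.natDegree_pos n
          fun k j => P.natDegree * Λ P ^ k * lCoeff Λ (n - j)
    _ = ∑ j ∈ Icc 1 n, lPowerSum Λ j * lCoeff Λ (n - j) := by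
        simp only [Finset.sum_filter]
        rw [Finset.sum_comm]
        refine Finset.sum_congr rfl fun j hj => ?_
        obtain ⟨hj, hjn⟩ := Finset.mem_Icc.1 hj
        rw [lPowerSum_eq_sum_of_le Λ hj hjn, Finset.sum_mul, Finset.sum_filter]

theorem lCoeff_zero : lCoeff Λ 0 = 1 := by
  have h : monicOfDegree F 0 = {1} := by
    ext f
    rw [mem_monicOfDegree, Finset.mem_singleton]
    exact ⟨fun h => h.1.natDegree_eq_zero.1 h.2, fun h => h ▸ ⟨monic_one, natDegree_one⟩⟩
  rw [lCoeff, h, Finset.sum_singleton, map_one]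

theorem lCoeff_one : lCoeff Λ 1 = lPowerSum Λ 1 := by
  simpa only [Nat.cast_one, one_mul, Icc_self, Finset.sum_singleton, Nat.sub_self, lCoeff_zero,
    mul_one] using natCast_mul_lCoeff Λ 1

theorem add_C_mul_X_pow_mem_monicOfDegree {n : ℕ} (hn : 0 < n) (d : F) {f : F[X]}
    (hf : f ∈ monicOfDegree F n) : f + C d * X ^ (n - 1) ∈ monicOfDegree F n := by
  obtain ⟨hm, rfl⟩ := mem_monicOfDegree.1 hf
  have hlt : (C d * X ^ (f.natDegree - 1)).degree < f.degree := by
    rw [degree_eq_natDegree hm.ne_zero]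
    exact (degree_C_mul_X_pow_le _ _).trans_lt (Nat.cast_lt.2 (Nat.sub_one_lt hn.ne'))
  exact mem_monicOfDegree.2 ⟨hm.add_of_left hlt, natDegree_add_eq_left_of_degree_lt hlt⟩

end LSeries

theorem lCoeff_two {F R : Type*} [Field F] [Fintype F] [CommSemiring R] (Λ : F[X] →* R) :
    lCoeff Λ 2 = ∑ b : F, ∑ a : F, Λ (X ^ 2 + C a * X + C b) := by
  rw [← Fintype.sum_prod_type', lCoeff]
  refine (Finset.sum_nbij (fun p : F × F => X ^ 2 + C p.2 * X + C p.1) (fun p _ => ?_)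
    (fun p _ p' _ h => ?_) (fun f hf => ?_) fun _ _ => rfl).symm
  · exact mem_monicOfDegree.2 ⟨by monicity!, by compute_degree!⟩
  · have h0 := congrArg (coeff · 0) h
    have h1 := congrArg (coeff · 1) h
    simp only [coeff_add, coeff_X_pow, coeff_C_mul, coeff_X, coeff_C] at h0 h1
    norm_num at h0 h1
    exact Prod.ext h0 h1
  · obtain ⟨hm, hdeg⟩ := mem_monicOfDegree.1 hf
    refine ⟨(f.coeff 0, f.coeff 1), mem_coe.2 (mem_univ _), ?_⟩
    conv_rhs => rw [hm.as_sum, hdeg, Finset.sum_range_succ, Finset.sum_range_one]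
    ring

theorem lCoeff_eq_zero_of_shift {F R : Type*} [Field F] [Finite F] [CommRing R] [IsDomain R]
    (Λ : F[X] →* R) {n : ℕ} (hn : 0 < n) (d : F) {r : R} (hr : r ≠ 1)
    (h : ∀ f ∈ monicOfDegree F n, Λ (f + C d * X ^ (n - 1)) = r * Λ f) : lCoeff Λ n = 0 := by
  have hshift : lCoeff Λ n = r * lCoeff Λ n := by
    conv_rhs => rw [lCoeff, Finset.mul_sum, ← Finset.sum_congr rfl h]
    refine (Finset.sum_nbij' (· + C d * X ^ (n - 1)) (· + C (-d) * X ^ (n - 1))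
      (fun f => add_C_mul_X_pow_mem_monicOfDegree hn d)
      (fun f => add_C_mul_X_pow_mem_monicOfDegree hn (-d)) (fun f _ => ?_) (fun f _ => ?_)
      fun _ _ => rfl).symm
    all_goals
      rw [C_neg]
      ring
  by_contra h0
  exact hr ((mul_eq_right₀ h0).1 hshift.symm)

theorem lPowerSum_of_quadratic {F R : Type*} [Field F] [Finite F] [CommRing R] (Λ : F[X] →* R)
    {α β : R} (h1 : lCoeff Λ 1 = -(α + β)) (h2 : lCoeff Λ 2 = α * β)
    (h3 : ∀ n, 3 ≤ n → lCoeff Λ n = 0) (n : ℕ) :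
    lPowerSum Λ (n + 1) = -(α ^ (n + 1) + β ^ (n + 1)) := by
  induction n using Nat.twoStepInduction with
  | zero => rw [zero_add, ← lCoeff_one, h1, pow_one, pow_one]
  | one =>
    have h := natCast_mul_lCoeff Λ 2
    rw [Finset.sum_Icc_succ_top one_le_two, Icc_self, Finset.sum_singleton, Nat.sub_self,
      lCoeff_zero, ← lCoeff_one, h2, show 2 - 1 = 1 from rfl, h1] at h
    push_cast at h
    linear_combination -h
  | more n ih1 ih2 =>
    have h := natCast_mul_lCoeff Λ (n + 3)
    rw [h3 _ (by omega), mul_zero, Finset.sum_Icc_succ_top (by omega),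
      Finset.sum_Icc_succ_top (by omega), Finset.sum_Icc_succ_top (by omega), Finset.sum_eq_zero
        fun j hj => by rw [h3 _ (by have := Finset.mem_Icc.1 hj; omega), mul_zero],
      Nat.sub_self, show n + 3 - (n + 1) = 2 by omega, show n + 3 - (n + 2) = 1 by omega,
      lCoeff_zero, h1, h2, ih1, ih2] at h
    linear_combination -h

section Minpoly

open IntermediateField

variable {F K : Type*} [Field F] [Field K] [Algebra F K]

theorem adjoin_simple_inv (x : K) : F⟮x⁻¹⟯ = F⟮x⟯ :=
  le_antisymm (adjoin_simple_le_iff.2 (inv_mem (mem_adjoin_simple_self F x)))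
    (adjoin_simple_le_iff.2 (inv_mem_iff.1 (mem_adjoin_simple_self F x⁻¹)))

theorem minpoly_inv {x : K} (hx : x ≠ 0) (hint : IsIntegral F x) :
    minpoly F x⁻¹ = C ((minpoly F x).coeff 0)⁻¹ * (minpoly F x).reverse := by
  have h0 := minpoly.coeff_zero_ne_zero hint hx
  have htrailing : (minpoly F x).natTrailingDegree = 0 := natTrailingDegree_eq_zero.2 (.inr h0)
  have hroot : aeval x⁻¹ (minpoly F x).reverse = 0 := by
    let := invertibleOfNonzero hx
    rw [← invOf_eq_inv]
    exact (eval₂_reverse_eq_zero_iff (algebraMap F K) x _).2 (minpoly.aeval F x)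
  refine (minpoly.unique_of_degree_le_degree_minpoly F x⁻¹ ?_ ?_ ?_).symm
  · rw [Monic, leadingCoeff_mul, leadingCoeff_C, reverse_leadingCoeff, trailingCoeff, htrailing,
      inv_mul_cancel₀ h0]
  · rw [map_mul, hroot, mul_zero]
  · rw [degree_C_mul (inv_ne_zero h0), degree_eq_natDegree (minpoly.ne_zero hint.inv),
      ← adjoin.finrank hint.inv, adjoin_simple_inv, adjoin.finrank hint]
    exact degree_le_of_natDegree_le (reverse_natDegree_le _)

theorem nextCoeff_minpoly_inv {x : K} (hx : x ≠ 0) (hint : IsIntegral F x) :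
    (minpoly F x⁻¹).nextCoeff = (minpoly F x).coeff 1 / (minpoly F x).coeff 0 := by
  have h0 := minpoly.coeff_zero_ne_zero hint hx
  rw [minpoly_inv hx hint, ← coeff_one_reverse, reverse_mul_of_domain, reverse_C, coeff_C_mul,
    coeff_reverse, reverse_natDegree, natTrailingDegree_eq_zero.2 (.inr h0), Nat.sub_zero,
    coeff_reverse, revAt_invol, inv_mul_eq_div]

theorem card_filter_minpoly_eq [Fintype K] {P : F[X]} (hm : P.Monic)
    (hi : Irreducible P) (hP : P.natDegree ∣ Module.finrank F K) :
    #{x : K | minpoly F x = P} = P.natDegree := by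
  have : Finite F := .of_injective _ (algebraMap F K).injective
  have hsplits : (P.map (algebraMap F K)).Splits := by
    have hdvd := hi.natDegree_dvd_iff_dvd_X_pow_card_pow_sub_X.1 hP
    have hX := (FiniteField.isSplittingField_sub K F).splits'
    rw [Fintype.card_eq_nat_card, Module.natCard_eq_pow_finrank (K := F) (V := K)] at hX
    exact hX.of_dvd (Polynomial.map_ne_zero
      (FiniteField.X_pow_card_pow_sub_X_ne_zero F Module.finrank_pos.ne' Finite.one_lt_card))
      (map_dvd (mapRingHom (algebraMap F K)) hdvd)
  have hroots : ({x : K | minpoly F x = P} : Finset K) = (P.aroots K).toFinset := by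
    ext x
    rw [Multiset.mem_toFinset, mem_aroots, ← minpoly.eq_iff_aeval_eq_zero hi hm, mem_filter_univ,
      and_iff_right hm.ne_zero, eq_comm]
  rw [hroots, Multiset.toFinset_card_of_nodup (nodup_roots
    (PerfectField.separable_of_irreducible hi).map), ← hsplits.natDegree_eq_card_roots,
    natDegree_map]

variable [FiniteDimensional F K]

theorem trace_inv_eq_finrank_mul {x : K} (hx : x ≠ 0) :
    Algebra.trace F K x⁻¹ =
      Module.finrank F⟮x⟯ K * -((minpoly F x).coeff 1 / (minpoly F x).coeff 0) := by
  rw [trace_eq_finrank_mul_minpoly_nextCoeff, adjoin_simple_inv,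
    nextCoeff_minpoly_inv hx (Algebra.IsIntegral.isIntegral x)]

theorem norm_eq_coeff_zero_minpoly_pow_finrank (x : K) :
    Algebra.norm F x =
      ((-1) ^ (minpoly F x).natDegree * (minpoly F x).coeff 0) ^ Module.finrank F⟮x⟯ K := by
  have h := Algebra.PowerBasis.norm_gen_eq_coeff_zero_minpoly
    (adjoin.powerBasis (Algebra.IsIntegral.isIntegral (R := F) x))
  rw [adjoin.powerBasis_gen, adjoin.powerBasis_dim, minpoly_gen] at h
  rw [Algebra.norm_eq_norm_adjoin, h]

end Minpoly

section KloostermanHom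

open IntermediateField

variable {F R : Type*} [Field F] [CommRing R] (ψ : AddChar F R) (χ : MulChar F R) (c : F)

/-- For a monic `f = ∏ (X - xᵢ)` this is `χ (∏ xᵢ) * ψ (∑ xᵢ + c * ∑ xᵢ⁻¹)`. The junk value of the
quotient at `f.coeff 0 = 0` is harmless, as `χ 0 = 0`. -/
def kloostermanWeight (f : F[X]) : R :=
  χ ((-1) ^ f.natDegree * f.coeff 0) * ψ (-f.nextCoeff - c * (f.coeff 1 / f.coeff 0))

theorem kloostermanWeight_of_coeff_zero_eq_zero {f : F[X]} (hf : f.coeff 0 = 0) :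
    kloostermanWeight ψ χ c f = 0 := by
  rw [kloostermanWeight, hf, mul_zero, χ.map_zero, zero_mul]

theorem kloostermanWeight_mul {f g : F[X]} (hf : f.Monic) (hg : g.Monic) :
    kloostermanWeight ψ χ c (f * g) = kloostermanWeight ψ χ c f * kloostermanWeight ψ χ c g := by
  rcases eq_or_ne (f.coeff 0) 0 with hf0 | hf0
  · rw [kloostermanWeight_of_coeff_zero_eq_zero ψ χ c hf0, zero_mul,
      kloostermanWeight_of_coeff_zero_eq_zero ψ χ c (by rw [mul_coeff_zero, hf0, zero_mul])]
  rcases eq_or_ne (g.coeff 0) 0 with hg0 | hg0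
  · rw [kloostermanWeight_of_coeff_zero_eq_zero ψ χ c hg0, mul_zero,
      kloostermanWeight_of_coeff_zero_eq_zero ψ χ c (by rw [mul_coeff_zero, hg0, mul_zero])]
  simp only [kloostermanWeight]
  rw [mul_mul_mul_comm, ← map_mul, ← AddChar.map_add_eq_mul, hf.natDegree_mul hg,
    hf.nextCoeff_mul hg, mul_coeff_zero, mul_coeff_one]
  congr 2
  · ring
  · field

/-- The weight `kloostermanWeight`, made completely multiplicative by ignoring the leading
coefficient. -/
noncomputable def kloostermanHom : F[X] →* R where
  toFun f := kloostermanWeight ψ χ c (normalize f)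
  map_one' := by
    rw [normalize_one, kloostermanWeight, natDegree_one, coeff_one_zero, coeff_one, nextCoeff,
      natDegree_one]
    simp
  map_mul' f g := by
    rcases eq_or_ne f 0 with rfl | hf
    · rw [zero_mul, normalize_zero, kloostermanWeight_of_coeff_zero_eq_zero ψ χ c (coeff_zero 0),
        zero_mul]
    rcases eq_or_ne g 0 with rfl | hg
    · rw [mul_zero, normalize_zero, kloostermanWeight_of_coeff_zero_eq_zero ψ χ c (coeff_zero 0),
        mul_zero]
    rw [normalize_mul, kloostermanWeight_mul ψ χ c (monic_normalize hf) (monic_normalize hg)]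

theorem kloostermanHom_apply {f : F[X]} (hf : f.Monic) :
    kloostermanHom ψ χ c f =
      χ ((-1) ^ f.natDegree * f.coeff 0) * ψ (-f.nextCoeff - c * (f.coeff 1 / f.coeff 0)) :=
  congrArg (kloostermanWeight ψ χ c) hf.normalize_eq_self

theorem kloostermanHom_minpoly_pow_finrank {K : Type*} [Field K] [Algebra F K]
    [FiniteDimensional F K] (x : K) :
    kloostermanHom ψ χ c (minpoly F x) ^ Module.finrank F⟮x⟯ K =
      normLift K χ x * traceLift K ψ (x + algebraMap F K c * x⁻¹) := by
  have hint : IsIntegral F x := Algebra.IsIntegral.isIntegral x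
  rw [kloostermanHom_apply ψ χ c (minpoly.monic hint), mul_pow, ← map_pow,
    ← norm_eq_coeff_zero_minpoly_pow_finrank, normLift_apply]
  rcases eq_or_ne x 0 with rfl | hx
  · rw [Algebra.norm_zero, χ.map_zero, zero_mul, zero_mul]
  rw [traceLift_apply, map_add, ← Algebra.smul_def, map_smul,
    trace_eq_finrank_mul_minpoly_nextCoeff, trace_inv_eq_finrank_mul hx,
    ← AddChar.map_nsmul_eq_pow, nsmul_eq_mul, smul_eq_mul]
  congr 2
  ring

theorem lPowerSum_kloostermanHom_finrank [Finite F] {K : Type*} [Field K] [Fintype K]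
    [Algebra F K] :
    lPowerSum (kloostermanHom ψ χ c) (Module.finrank F K) =
      kloostermanSum (traceLift K ψ) (normLift K χ) (algebraMap F K c) := by
  have hdegree (x : K) : (minpoly F x).natDegree * Module.finrank F⟮x⟯ K = Module.finrank F K := by
    rw [← adjoin.finrank (Algebra.IsIntegral.isIntegral x), Module.finrank_mul_finrank]
  have hmaps (x : K) : minpoly F x ∈
      {P ∈ monicIrreducibles F (Module.finrank F K) | P.natDegree ∣ Module.finrank F K} := by
    have hint : IsIntegral F x := Algebra.IsIntegral.isIntegral x
    have hdvd : (minpoly F x).natDegree ∣ Module.finrank F K := minpoly.degree_dvd hint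
    exact mem_filter.2 ⟨mem_monicIrreducibles.2 ⟨minpoly.monic hint, minpoly.irreducible hint,
      Nat.le_of_dvd Module.finrank_pos hdvd⟩, hdvd⟩
  rw [kloostermanSum, ← Finset.sum_fiberwise_of_maps_to fun x _ => hmaps x, lPowerSum]
  refine Finset.sum_congr rfl fun P hP => ?_
  obtain ⟨hmem, hdvd⟩ := mem_filter.1 hP
  obtain ⟨hm, hi, -⟩ := mem_monicIrreducibles.1 hmem
  rw [← card_filter_minpoly_eq (K := K) hm hi hdvd, ← nsmul_eq_mul, ← Finset.sum_const]
  refine Finset.sum_congr rfl fun x hx => ?_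
  rw [← kloostermanHom_minpoly_pow_finrank, (mem_filter.1 hx).2, card_filter_minpoly_eq hm hi hdvd,
    ← hdegree x, (mem_filter.1 hx).2, Nat.mul_div_cancel_left _ hi.natDegree_pos]

theorem lCoeff_kloostermanHom_one [Fintype F] :
    lCoeff (kloostermanHom ψ χ c) 1 = kloostermanSum ψ χ c := by
  have h := lPowerSum_kloostermanHom_finrank ψ χ c (K := F)
  rw [Module.finrank_self] at h
  simpa only [lCoeff_one, kloostermanSum, traceLift_apply, normLift_apply, Algebra.trace_self_apply,
    Algebra.norm_self, MonoidHom.id_apply, Algebra.algebraMap_self_apply] using h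

theorem lCoeff_kloostermanHom_two [Fintype F] [IsDomain R] {ψ : AddChar F R} (hψ : ψ ≠ 1) :
    lCoeff (kloostermanHom ψ χ c) 2 = χ (-c) * Fintype.card F := by
  have hquadratic (a b : F) : kloostermanHom ψ χ c (X ^ 2 + C a * X + C b) =
      χ b * ψ (a * (-1 - c / b)) := by
    have hdeg : (X ^ 2 + C a * X + C b).natDegree = 2 := by compute_degree!
    rw [kloostermanHom_apply ψ χ c (by monicity!), nextCoeff_of_natDegree_pos (by omega), hdeg]
    simp only [coeff_add, coeff_X_pow, coeff_C_mul, coeff_X, coeff_C]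
    norm_num
    left
    congr 1
    ring
  have hsum (b : F) : ∑ a, kloostermanHom ψ χ c (X ^ 2 + C a * X + C b) =
      χ b * ((if -1 - c / b = 0 then Fintype.card F else 0 : ℕ) : R) := by
    simp only [hquadratic, ← Finset.mul_sum,
      AddChar.sum_mulShift _ (AddChar.IsPrimitive.of_ne_one hψ)]
  rw [lCoeff_two, Finset.sum_congr rfl fun b _ => hsum b, Finset.sum_eq_single (-c)]
  · rcases eq_or_ne c 0 with rfl | hc
    · rw [neg_zero, χ.map_zero, zero_mul, zero_mul]
    · rw [div_neg, div_self hc, sub_neg_eq_add, neg_add_cancel, if_pos rfl]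
  · intro b _ hb
    rw [if_neg, Nat.cast_zero, mul_zero]
    rcases eq_or_ne b 0 with rfl | hb0
    · simp
    · contrapose! hb
      field_simp at hb
      linear_combination -hb
  · exact fun h => absurd (mem_univ _) h

theorem lCoeff_kloostermanHom_eq_zero [Finite F] [IsDomain R] {ψ : AddChar F R} (hψ : ψ ≠ 1)
    {n : ℕ} (hn : 3 ≤ n) : lCoeff (kloostermanHom ψ χ c) n = 0 := by
  obtain ⟨d, hd⟩ := AddChar.ne_one_iff.1 hψ
  refine lCoeff_eq_zero_of_shift (kloostermanHom ψ χ c) (by omega) (-d) hd fun f hf => ?_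
  obtain ⟨hm, hdeg⟩ := mem_monicOfDegree.1 hf
  obtain ⟨hm', hdeg'⟩ := mem_monicOfDegree.1 (add_C_mul_X_pow_mem_monicOfDegree (by omega) (-d) hf)
  have hcoeff {i : ℕ} (hi : i ≠ n - 1) : (f + C (-d) * X ^ (n - 1)).coeff i = f.coeff i := by
    rw [coeff_add, coeff_C_mul_X_pow, if_neg hi, add_zero]
  have hnext : (f + C (-d) * X ^ (n - 1)).nextCoeff = f.nextCoeff - d := by
    rw [nextCoeff_of_natDegree_pos (by omega), nextCoeff_of_natDegree_pos (by omega), hdeg, hdeg',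
      coeff_add, coeff_C_mul_X_pow, if_pos rfl, sub_eq_add_neg]
  rw [kloostermanHom_apply ψ χ c hm', kloostermanHom_apply ψ χ c hm, hcoeff (by omega),
    hcoeff (by omega), hnext, hdeg, hdeg', mul_left_comm, ← AddChar.map_add_eq_mul]
  congr 2
  ring

end KloostermanHom

theorem norm_le_of_eventually_norm_pow_add_pow_le {𝕜 : Type*} [NormedField 𝕜] {x y : 𝕜} {q B : ℝ}
    (hq : 0 < q) (hxy : ‖x‖ * ‖y‖ ≤ q ^ 2)
    (hB : ∀ᶠ n : ℕ in Filter.atTop, ‖x ^ n + y ^ n‖ ≤ B * q ^ n) : ‖x‖ ≤ q := by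
  by_contra! hx
  have hy : ‖y‖ ≤ q := by
    by_contra! hy
    nlinarith
  have hratio : ∀ᶠ n : ℕ in Filter.atTop, B + 1 < (‖x‖ / q) ^ n :=
    (tendsto_pow_atTop_atTop_of_one_lt ((one_lt_div hq).2 hx)).eventually_gt_atTop _
  obtain ⟨n, hn, hlt⟩ := (hB.and hratio).exists
  have hupper : ‖x‖ ^ n ≤ (B + 1) * q ^ n := calc
    ‖x‖ ^ n = ‖x ^ n + y ^ n - y ^ n‖ := by rw [add_sub_cancel_right, norm_pow]
    _ ≤ ‖x ^ n + y ^ n‖ + ‖y ^ n‖ := norm_sub_le _ _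
    _ ≤ B * q ^ n + q ^ n := by
      rw [norm_pow y]
      gcongr
    _ = (B + 1) * q ^ n := by ring
  rw [div_pow, lt_div_iff₀ (pow_pos hq n)] at hlt
  exact hlt.not_ge hupper

theorem exists_add_eq_mul_eq {k : Type*} [Field k] [IsAlgClosed k] [NeZero (2 : k)] (s p : k) :
    ∃ α β, α + β = s ∧ α * β = p := by
  obtain ⟨α, hα⟩ := exists_quadratic_eq_zero (one_ne_zero (α := k))
    (IsAlgClosed.exists_eq_mul_self (discrim 1 (-s) p))
  exact ⟨α, s - α, by ring, by linear_combination -hα⟩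

section Weil

variable {F : Type*} [Field F] [Fintype F] {ψ : AddChar F ℂ}

theorem norm_lPowerSum_kloostermanHom_le (hψ : ψ ≠ 1) (χ : MulChar F ℂ) (c : F) {n : ℕ}
    (hn : 3 ≤ n) : ‖lPowerSum (kloostermanHom ψ χ c) (2 * n)‖ ≤
      6 * (Fintype.card F : ℝ) ^ 2 * Fintype.card F ^ n := by
  obtain ⟨p, hp, -, hprime, -⟩ := FiniteField.card' F
  have : Fact p.Prime := ⟨hprime⟩
  have : NeZero (2 * n) := ⟨by omega⟩
  let := Fintype.ofFinite (FiniteField.Extension F p (2 * n))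
  have hrank := FiniteField.finrank_extension F p (2 * n)
  have hcard : (1 : ℝ) ≤ Fintype.card F := Nat.one_le_cast.2 Fintype.card_pos
  obtain ⟨m, rfl⟩ := Nat.exists_eq_add_one.2 (by omega : 0 < n)
  rw [← hrank, lPowerSum_kloostermanHom_finrank]
  calc _ ≤ 5 * (Fintype.card F : ℝ) ^ (m + 3) + 1 :=
        norm_kloostermanSum_lift_le hrank (by omega) hψ χ _
    _ ≤ 6 * (Fintype.card F : ℝ) ^ (m + 3) := by linarith [one_le_pow₀ hcard (n := m + 3)]
    _ = 6 * (Fintype.card F : ℝ) ^ 2 * Fintype.card F ^ (m + 1) := by ring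

theorem norm_kloostermanSum_le (hψ : ψ ≠ 1) (χ : MulChar F ℂ) (c : F) :
    ‖kloostermanSum ψ χ c‖ ≤ 2 * √(Fintype.card F) := by
  obtain ⟨α, β, hadd, hmul⟩ :=
    exists_add_eq_mul_eq (-kloostermanSum ψ χ c) (χ (-c) * Fintype.card F)
  have hpower (n : ℕ) : lPowerSum (kloostermanHom ψ χ c) (n + 1) = -(α ^ (n + 1) + β ^ (n + 1)) :=
    lPowerSum_of_quadratic _ (by rw [lCoeff_kloostermanHom_one, hadd, neg_neg])
      (by rw [lCoeff_kloostermanHom_two χ c hψ, hmul])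
      (fun _ => lCoeff_kloostermanHom_eq_zero χ c hψ) n
  have hgrowth : ∀ᶠ n : ℕ in Filter.atTop, ‖(α ^ 2) ^ n + (β ^ 2) ^ n‖ ≤
      6 * (Fintype.card F : ℝ) ^ 2 * Fintype.card F ^ n := by
    filter_upwards [Filter.eventually_ge_atTop 3] with n hn
    have h := norm_lPowerSum_kloostermanHom_le hψ χ c hn
    obtain ⟨k, hk⟩ := Nat.exists_eq_add_one.2 (by omega : 0 < 2 * n)
    rwa [hk, hpower, norm_neg, ← hk, pow_mul, pow_mul] at h
  have hprod : ‖α ^ 2‖ * ‖β ^ 2‖ ≤ (Fintype.card F : ℝ) ^ 2 := by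
    rw [← norm_mul, ← mul_pow, hmul, norm_pow, norm_mul, Complex.norm_natCast]
    exact pow_le_pow_left₀ (by positivity)
      (mul_le_of_le_one_left (Nat.cast_nonneg _) (norm_mulChar_le_one χ _)) 2
  have hq : (0 : ℝ) < Fintype.card F := Nat.cast_pos.2 Fintype.card_pos
  have hα : ‖α‖ ≤ √(Fintype.card F) := Real.le_sqrt_of_sq_le <| (norm_pow α 2).symm.trans_le <|
    norm_le_of_eventually_norm_pow_add_pow_le hq hprod hgrowth
  have hβ : ‖β‖ ≤ √(Fintype.card F) := Real.le_sqrt_of_sq_le <| (norm_pow β 2).symm.trans_le <|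
    norm_le_of_eventually_norm_pow_add_pow_le hq (by rwa [mul_comm])
      (hgrowth.mono fun n hn => by rwa [add_comm])
  calc ‖kloostermanSum ψ χ c‖ = ‖α + β‖ := by rw [hadd, norm_neg]
    _ ≤ 2 * √(Fintype.card F) := by linarith [norm_add_le α β]

end Weil

theorem conj_kloostermanSum {F : Type*} [Field F] [Fintype F] (ψ : AddChar F ℂ) (χ : MulChar F ℂ)
    {c : F} (hc : c ≠ 0) :
    χ (-c) * (starRingEnd ℂ) (kloostermanSum ψ χ c) = kloostermanSum ψ χ c := by
  rw [kloostermanSum, map_sum, Finset.mul_sum]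
  refine Fintype.sum_equiv ((Equiv.inv F).trans (Equiv.mulLeft₀ (-c) (neg_ne_zero.2 hc))) _ _
    fun x => ?_
  rw [map_mul, ← AddChar.map_neg_eq_conj, starRingEnd_apply, MulChar.star_apply',
    MulChar.inv_apply', ← mul_assoc, ← map_mul]
  simp only [Equiv.trans_apply, Equiv.inv_apply, Equiv.mulLeft₀_apply]
  congr 2
  field_simp
  ring

theorem evansSum_eq_kloostermanSum {F : Type*} [Field F] [Fintype F] (ψ : AddChar F ℂ)
    (χ : Fˣ →* ℂˣ) : evansSum ψ χ =
      ((-(1 / √(Fintype.card F)) : ℝ) : ℂ) * kloostermanSum ψ (MulChar.ofUnitHom χ) (-1) := by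
  rw [evansSum, kloostermanSum_eq_sum_units]
  push_cast
  simp only [MulChar.ofUnitHom_coe, neg_one_mul, ← sub_eq_add_neg]

/-- **Reality and bound for Evans sums.** For every finite field `F_q`, every nontrivial
additive character `ψ` and every multiplicative character `χ`, the Evans sum
`S(χ) = −(1/√q) ∑_{x ∈ F_q^×} χ(x) ψ(x − x⁻¹)` is real and satisfies `|S(χ)| ≤ 2`. -/
theorem evansSum_real_and_bounded
    {F : Type*} [Field F] [Fintype F] (ψ : AddChar F ℂ) (hψ : ψ ≠ 1)
    (χ : Fˣ →* ℂˣ) :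
    (starRingEnd ℂ) (evansSum ψ χ) = evansSum ψ χ ∧ ‖evansSum ψ χ‖ ≤ 2 := by
  have hq : 0 < √(Fintype.card F) := Real.sqrt_pos.2 (Nat.cast_pos.2 Fintype.card_pos)
  rw [evansSum_eq_kloostermanSum]
  constructor
  · have hreal := conj_kloostermanSum ψ (MulChar.ofUnitHom χ) (neg_ne_zero.2 one_ne_zero)
    rw [neg_neg, map_one, one_mul] at hreal
    rw [map_mul, Complex.conj_ofReal, hreal]
  · rw [norm_mul, Complex.norm_real, norm_neg, Real.norm_of_nonneg (by positivity),
      one_div_mul_eq_div, div_le_iff₀ hq]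
    exact norm_kloostermanSum_le hψ _ _
end

section
/- Reality and bound for Rudnick sums: For every finite field F_q of odd characteristic with q elements, every nontrivial additive character ψ : (F_q,+) → ℂˣ and every nontrivial multiplicative character χ : F_q^× → ℂˣ, the Rudnick sum E(χ) = −(1/√q) Σ_{x ∈ F_q \ {0,1}} χ(x) ψ((x+1)/(x−1)) is a real number satisfying |E(χ)| ≤ 2. -/
open Finset
open scoped Classical

/-- The Rudnick sum `E(χ) = −(1/√q) ∑_{x ∈ F_q, x ≠ 0, 1} χ(x) ψ((x+1)/(x−1))`. -/
noncomputable def rudnickSum {F : Type*} [Field F] [Fintype F]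
    (ψ : AddChar F ℂ) (χ : Fˣ →* ℂˣ) : ℂ :=
  -(1 / (Real.sqrt (Fintype.card F) : ℂ)) *
    ∑ x ∈ Finset.univ.filter (fun x : Fˣ => (x : F) ≠ 1),
      (χ x : ℂ) * ψ (((x : F) + 1) / ((x : F) - 1))

/-!
The substitution `s = (x + 1) / (x - 1)` turns `E(χ)` into
`-(1 / √q) * ∑ s, χ ((s + 1) / (s - 1)) * ψ s`. Conjugation inverts both characters, which
`s ↦ -s` undoes, so `E(χ)` is real.

Lifting `ψ` and `χ` along trace and norm to the quadratic extension replaces `E` by `E² - 2`: in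
terms of `T = s + t` and `n = s * t`, the pairs in `F_q²` and the conjugate pairs of the quadratic
extension together cover every `(T, n)` exactly twice, and the sum over all `(T, n)` is the squared
absolute value `q` of a Gauss sum. Since the orbit of `E` under `z ↦ z² - 2` is unbounded as soon as
`|E| > 2`, it suffices to bound the lifted sums independently of the extension.

For that, the number of `s` in the extension `L` with prescribed trace and prescribed nonzero norm
of `(s + 1) / (s - 1)` is bounded by Stepanov's method in Bombieri's form. Writing
`s + 1 = w ^ q - w`, such `s` give points of the curve
`y ^ (q - 1) = (w ^ q - w) * (w ^ q - w - 2) ^ (q - 2)` at which the `#L`-power map acts as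
`(w, y) ↦ (w + α, c * y)`. Let `r² = #L`, let `f i` be functions of order `i` at `w = y = 0`, and
take a nontrivial relation `∑ b i j * f i ^ r * f j (w + α, c * y) = 0`. Then
`∑ b i j * f i * f j ^ r` is nonzero, as the orders of its `f i` are distinct modulo `r`, but its
`r`-th power vanishes at all these points. Such an upper bound for every fibre suffices, because
the values of `χ` and `ψ` summed over all fibres cancel.
-/

namespace RudnickSum

theorem norm_le_two_of_eventually_norm_iterate_sq_sub_two_le {z : ℂ} {C : ℝ}
    (h : ∀ᶠ k in Filter.atTop, ‖(fun w : ℂ => w ^ 2 - 2)^[k] z‖ ≤ C) : ‖z‖ ≤ 2 := by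
  by_contra! hz
  have growth (k : ℕ) : 2 + 4 ^ k * (‖z‖ - 2) ≤ ‖(fun w : ℂ => w ^ 2 - 2)^[k] z‖ := by
    induction k with
    | zero => simp
    | succ k ih =>
      rw [Function.iterate_succ_apply']
      have hstep := norm_sub_norm_le (((fun w : ℂ => w ^ 2 - 2)^[k] z) ^ 2) 2
      rw [norm_pow, Complex.norm_ofNat] at hstep
      have hpos : 0 < 4 ^ k * (‖z‖ - 2) := by have := sub_pos.mpr hz; positivity
      rw [pow_succ]
      nlinarith
  have hlim : Filter.Tendsto (fun k : ℕ => 2 + (4 : ℝ) ^ k * (‖z‖ - 2))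
      Filter.atTop Filter.atTop :=
    Filter.tendsto_atTop_add_const_left _ _
      ((tendsto_pow_atTop_atTop_of_one_lt (by norm_num)).atTop_mul_const (sub_pos.mpr hz))
  obtain ⟨k, hk, hk'⟩ := (h.and (hlim.eventually_gt_atTop C)).exists
  linarith [growth k]

theorem norm_sum_comp_le_of_card_fiber_le {ι κ E : Type*} [DecidableEq κ]
    [SeminormedAddCommGroup E] [NormedSpace ℝ E] {B : Finset ι} {P : Finset κ} {g : ι → κ}
    {a : κ → E} {D : ℕ}
    (hg : ∀ x ∈ B, g x ∈ P) (ha : ∀ p ∈ P, ‖a p‖ ≤ 1) (hsum : ∑ p ∈ P, a p = 0)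
    (hD : ∀ p ∈ P, #P * #{x ∈ B | g x = p} ≤ #B + D) : ‖∑ x ∈ B, a (g x)‖ ≤ D := by
  rcases P.eq_empty_or_nonempty with rfl | hP
  · have : B = ∅ := by by_contra! h; obtain ⟨x, hx⟩ := h; simpa using hg x hx
    simp [this]
  have hP0 : (0 : ℝ) < #P := by exact_mod_cast hP.card_pos
  -- The fibre sizes may be replaced by their nonnegative deficits, as `a` has sum zero.
  have hfib : ∑ x ∈ B, a (g x) = ∑ p ∈ P, (#{x ∈ B | g x = p} : ℝ) • a p := by
    rw [← sum_fiberwise_of_maps_to hg]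
    refine sum_congr rfl fun p _ => ?_
    rw [sum_congr rfl fun x hx => by rw [(mem_filter.mp hx).2], sum_const, Nat.cast_smul_eq_nsmul]
  have hdef : ∑ x ∈ B, a (g x)
      = -∑ p ∈ P, (((#B + D : ℕ) : ℝ) / #P - #{x ∈ B | g x = p}) • a p := by
    simp only [sub_smul, sum_sub_distrib, ← smul_sum, hsum, smul_zero, zero_sub, neg_neg, hfib]
  have hcard : (∑ p ∈ P, (#{x ∈ B | g x = p} : ℝ)) = #B := by
    exact_mod_cast (card_eq_sum_card_fiberwise hg).symm
  calc ‖∑ x ∈ B, a (g x)‖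
      ≤ ∑ p ∈ P, (((#B + D : ℕ) : ℝ) / #P - #{x ∈ B | g x = p}) := by
        rw [hdef, norm_neg]
        refine norm_sum_le_of_le _ fun p hp => ?_
        have hnonneg : 0 ≤ ((#B + D : ℕ) : ℝ) / #P - #{x ∈ B | g x = p} := by
          rw [sub_nonneg, le_div_iff₀' hP0]
          exact_mod_cast hD p hp
        rw [norm_smul, Real.norm_of_nonneg hnonneg]
        exact mul_le_of_le_one_right hnonneg (ha p hp)
    _ = D := by
        rw [sum_sub_distrib, hcard, sum_const, nsmul_eq_mul, mul_div_cancel₀ _ hP0.ne']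
        push_cast
        ring

section PowerSeries
open PowerSeries
variable {F : Type*} [Field F]

theorem eq_zero_of_sum_eq_zero_of_order_injOn {ι : Type*} {s : Finset ι} {f : ι → F⟦X⟧}
    (hord : Set.InjOn (fun i => (f i).order) {i ∈ s | f i ≠ 0}) (hsum : ∑ i ∈ s, f i = 0) :
    ∀ i ∈ s, f i = 0 := by
  by_contra! hne
  obtain ⟨i, hi, hmin⟩ := exists_min_image {i ∈ s | f i ≠ 0} (fun i => (f i).order)
    (by simpa [Finset.Nonempty] using hne)
  rw [mem_filter] at hi
  have hcoeff : coeff (f i).order.toNat (∑ j ∈ s, f j) = coeff (f i).order.toNat (f i) := by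
    rw [map_sum, sum_eq_single_of_mem i hi.1]
    intro j hj hji
    by_cases hfj : f j = 0
    · rw [hfj, map_zero]
    · refine coeff_of_lt_order _ ?_
      rw [coe_toNat_order hi.2]
      exact lt_of_le_of_ne (hmin j (by simp [hj, hfj]))
        fun h => hji (hord ⟨hj, hfj⟩ hi h.symm)
  exact coeff_order hi.2 (by rw [← hcoeff, hsum, map_zero])

theorem linearIndependent_of_order_eq {f : ℕ → F⟦X⟧} (hf : ∀ n, (f n).order = n) :
    LinearIndependent F f := by
  rw [linearIndependent_iff']
  intro s c hc i hi
  have hne (n : ℕ) : f n ≠ 0 := fun h => by simpa [h] using hf n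
  have horder {n : ℕ} (h : c n ≠ 0) : (c n • f n).order = n := by
    rw [smul_eq_C_mul, order_mul, order_zero_of_unit (by simpa using h), zero_add, hf]
  have := eq_zero_of_sum_eq_zero_of_order_injOn (f := fun n => c n • f n)
    (fun n hn k hk h => by
      simpa [horder (left_ne_zero_of_smul hn.2), horder (left_ne_zero_of_smul hk.2)] using h)
    hc i hi
  exact (smul_eq_zero.mp this).resolve_right (hne i)

theorem eq_zero_of_sum_mul_pow_eq_zero {f : ℕ → F⟦X⟧} (hf : ∀ n, (f n).order = n) {r : ℕ}
    {h : Fin r → F⟦X⟧} (hsum : ∑ n : Fin r, f n * h n ^ r = 0) (n : Fin r) : h n = 0 := by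
  have horder (n : Fin r) (hn : f n * h n ^ r ≠ 0) :
      (f n * h n ^ r).order = (n + r * (h n).order.toNat : ℕ) := by
    have hhn : h n ≠ 0 := fun h₀ => hn (by rw [h₀, zero_pow n.pos.ne', mul_zero])
    rw [order_mul, order_pow, hf, ← coe_toNat_order hhn, nsmul_eq_mul]
    norm_cast
  -- The order of the `n`-th term is congruent to `n` modulo `r`.
  have hinj : Set.InjOn (fun n : Fin r => (f n * h n ^ r).order)
      {n ∈ (univ : Finset (Fin r)) | f n * h n ^ r ≠ 0} := fun i hi j hj hij => by
    simp only [horder i hi.2, horder j hj.2, Nat.cast_inj] at hij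
    simpa [Nat.mod_eq_of_lt, Fin.ext_iff] using congrArg (· % r) hij
  have hfn : f n ≠ 0 := fun h₀ => by simpa [h₀] using hf n
  exact eq_zero_of_pow_eq_zero ((mul_eq_zero.mp
    (eq_zero_of_sum_eq_zero_of_order_injOn hinj hsum n (mem_univ n))).resolve_left hfn)

theorem order_aeval {g : Polynomial F} (hg : g.coeff 0 = 0) (hg' : g.coeff 1 ≠ 0) {ω : F⟦X⟧}
    (hω : constantCoeff ω = 0) : (Polynomial.aeval ω g).order = ω.order := by
  obtain ⟨g₁, rfl⟩ := Polynomial.X_dvd_iff.mpr hg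
  have hunit : IsUnit (Polynomial.aeval ω g₁) := by
    rw [isUnit_iff_constantCoeff, Polynomial.aeval_def, Polynomial.hom_eval₂, hω,
      Polynomial.eval₂_at_zero]
    simpa using hg'
  rw [map_mul, Polynomial.aeval_X, order_mul, order_zero_of_unit hunit, add_zero]

theorem exists_aeval_eq_X_pow {g : Polynomial F} (hg : g.coeff 0 = 0) (hg' : g.coeff 1 ≠ 0)
    {m : ℕ} (hm : m ≠ 0) : ∃ ω : F⟦X⟧, Polynomial.aeval ω g = X ^ m ∧ ω.order = m := by
  have hunit : IsUnit (coeff 1 (g : F⟦X⟧)) := by simpa using hg'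
  set φ : F⟦X⟧ := (g : F⟦X⟧).substInvOfIsUnit hunit
  have hφ : Polynomial.aeval φ g = X := by
    rw [← subst_coe (HasSubst.substInvOfIsUnit _ hunit)]
    exact subst_substInvOfIsUnit_right _ (by simpa using hg) hunit
  have hX : HasSubst (X ^ m : F⟦X⟧) := HasSubst.X_pow hm
  set ω : F⟦X⟧ := substAlgHom hX φ
  have hω : Polynomial.aeval ω g = X ^ m := by
    rw [Polynomial.aeval_algHom_apply, hφ, substAlgHom_X]
  have hX₀ : constantCoeff (X ^ m : F⟦X⟧) = 0 := by simp [hm]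
  have hω₀ : constantCoeff ω = 0 := by
    simp only [ω, coe_substAlgHom]
    exact constantCoeff_subst_eq_zero hX₀ _ (constantCoeff_substInvOfIsUnit _ _)
  exact ⟨ω, hω, by rw [← order_aeval hg hg' hω₀, hω, order_X_pow]⟩

end PowerSeries

section Polynomial
open Polynomial

theorem frobeniusAlgHom_pow_apply {F R : Type*} [Field F] [Fintype F] [CommRing R] [Algebra F R]
    (t : ℕ) (x : R) : (FiniteField.frobeniusAlgHom F R ^ t) x = x ^ Fintype.card F ^ t := by
  rw [AlgHom.coe_pow, FiniteField.coe_frobeniusAlgHom, pow_iterate]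

theorem sum_smul_pow_card_pow {F R ι : Type*} [Field F] [Fintype F] [CommRing R] [Algebra F R]
    (s : Finset ι) (c : ι → F) (x : ι → R) (t : ℕ) :
    (∑ i ∈ s, c i • x i) ^ Fintype.card F ^ t = ∑ i ∈ s, c i • x i ^ Fintype.card F ^ t := by
  simp only [← frobeniusAlgHom_pow_apply, map_sum, map_smul]

theorem exists_injective_forall_pow_eq {Ω : Type*} [Field Ω] [IsSepClosed Ω] {m : ℕ}
    (hm : (m : Ω) ≠ 0) {c : Ω} (hc : c ≠ 0) :
    ∃ b : Fin m → Ω, Function.Injective b ∧ ∀ i, b i ^ m = c := by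
  have hsep : (X ^ m - C c).Separable := separable_X_pow_sub_C c hm hc
  have hcard := card_rootSet_eq_natDegree (K := Ω) hsep
    (by simpa using IsSepClosed.splits_of_separable _ hsep)
  rw [natDegree_X_pow_sub_C] at hcard
  let e := (Fintype.equivFinOfCardEq hcard).symm
  refine ⟨fun i => e i, Subtype.val_injective.comp e.injective, fun i => ?_⟩
  simpa [sub_eq_zero] using aeval_eq_zero_of_mem_rootSet (e i).2

theorem linearIndependent_mul_pow_card_pow {F : Type*} [Field F] [Fintype F]
    {f : ℕ → PowerSeries F} (hf : ∀ n, (f n).order = n) (t K : ℕ) :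
    LinearIndependent F fun nk : Fin (Fintype.card F ^ t) × Fin K =>
      f nk.1 * f nk.2 ^ Fintype.card F ^ t := by
  rw [Fintype.linearIndependent_iff]
  intro c hc nk
  have hsum : ∑ n : Fin (Fintype.card F ^ t),
      f n * (∑ k : Fin K, c (n, k) • f k) ^ Fintype.card F ^ t = 0 := by
    rw [← hc, Fintype.sum_prod_type]
    simp only [sum_smul_pow_card_pow, mul_sum, mul_smul_comm]
  exact Fintype.linearIndependent_iff.mp
    ((linearIndependent_of_order_eq hf).comp _ Fin.val_injective) (fun k => c (nk.1, k))
    (eq_zero_of_sum_mul_pow_eq_zero hf hsum nk.1) nk.2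

section Curve
variable {F : Type*} [Field F] {g : F[X]} {m : ℕ}

/-- The coordinate ring `F[w, y] / (y ^ m - g(w))` of the affine superelliptic curve
`y ^ m = g(w)`, presented as an extension of `F[w]`: the coordinate function `w` is
`AdjoinRoot.of _ X` and `y` is `AdjoinRoot.root _`. -/
abbrev CurveRing (g : F[X]) (m : ℕ) : Type _ := AdjoinRoot (X ^ m - C g : F[X][X])

namespace CurveRing

/-- The coordinate function `y`. -/
noncomputable def y : CurveRing g m := AdjoinRoot.root _

/-- A polynomial in `w` as a function on the curve. -/
noncomputable def ofPoly : F[X] →ₐ[F] CurveRing g m := AdjoinRoot.ofAlgHom _ _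

theorem y_pow : (y : CurveRing g m) ^ m = ofPoly g := by
  have h := AdjoinRoot.mk_self (f := (X ^ m - C g : F[X][X]))
  rwa [map_sub, map_pow, AdjoinRoot.mk_X, AdjoinRoot.mk_C, sub_eq_zero] at h

/-- Evaluation at an `A`-valued point `(a, b)` of the curve. -/
noncomputable def eval {A : Type*} [CommRing A] [Algebra F A] (a b : A) (h : b ^ m = aeval a g) :
    CurveRing g m →ₐ[F] A :=
  AdjoinRoot.liftAlgHom _ (aeval a) b (by simp [h])

section eval
variable {A : Type*} [CommRing A] [Algebra F A] {a b : A} (h : b ^ m = aeval a g)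

@[simp] theorem eval_y : eval a b h y = b := AdjoinRoot.liftAlgHom_root ..

@[simp] theorem eval_ofPoly (p : F[X]) : eval a b h (ofPoly p) = aeval a p :=
  AdjoinRoot.liftAlgHom_of ..
end eval

/-- The monomial `w ^ i * y ^ j` with `m * i + j = n` and `j < m`. Where `y` is a uniformiser and
`w` vanishes to order `m`, it vanishes to order exactly `n`. -/
noncomputable def mono (n : ℕ) : CurveRing g m := ofPoly (X ^ (n / m)) * y ^ (n % m)

/-- The functions `∑ j < m, p j (w) * y ^ j` with all `p j` of degree less than `n`. -/
noncomputable def regularLT (g : F[X]) (m n : ℕ) : Submodule F (CurveRing g m) :=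
  LinearMap.range (∑ j : Fin m, LinearMap.mulRight F (y ^ (j : ℕ)) ∘ₗ ofPoly.toLinearMap ∘ₗ
    (degreeLT F n).subtype ∘ₗ LinearMap.proj j)

theorem mem_regularLT {n : ℕ} {f : CurveRing g m} : f ∈ regularLT g m n ↔
    ∃ p : Fin m → degreeLT F n, ∑ j, ofPoly (p j : F[X]) * y ^ (j : ℕ) = f := by
  simp [regularLT, LinearMap.mem_range, LinearMap.sum_apply]

instance (n : ℕ) : FiniteDimensional F (regularLT g m n) := by
  have : Module.Finite F (degreeLT F n) := .equiv (degreeLTEquiv F n).symm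
  unfold regularLT
  infer_instance

theorem finrank_regularLT_le (n : ℕ) : Module.finrank F (regularLT g m n) ≤ m * n := by
  have : Module.Finite F (degreeLT F n) := .equiv (degreeLTEquiv F n).symm
  refine (LinearMap.finrank_range_le _).trans_eq ?_
  simp [Module.finrank_pi_fintype, (degreeLTEquiv F n).finrank_eq]

theorem ofPoly_mul_y_pow_mem_regularLT (hm : 0 < m) {p : F[X]} {j n : ℕ}
    (hn : p.natDegree + g.natDegree * (j / m) < n) :
    (ofPoly p * y ^ j : CurveRing g m) ∈ regularLT g m n := by
  have hdeg : (p * g ^ (j / m)).degree < n := by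
    refine degree_le_natDegree.trans_lt (Nat.cast_lt.mpr ?_)
    refine (natDegree_mul_le.trans ?_).trans_lt hn
    grw [natDegree_pow_le, mul_comm]
  refine mem_regularLT.mpr ⟨Pi.single ⟨j % m, Nat.mod_lt j hm⟩ ⟨_, mem_degreeLT.mpr hdeg⟩, ?_⟩
  rw [Fintype.sum_eq_single ⟨j % m, Nat.mod_lt j hm⟩ fun k hk => by simp [Pi.single_eq_of_ne hk]]
  rw [Pi.single_eq_same, map_mul, map_pow, ← y_pow, ← pow_mul, mul_assoc, ← pow_add,
    Nat.div_add_mod]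

theorem card_lt_of_mem_regularLT {n : ℕ} {f : CurveRing g m} (hf : f ∈ regularLT g m n)
    (hf₀ : f ≠ 0) {Ω : Type*} [Field Ω] [IsSepClosed Ω] [Algebra F Ω] (hm : (m : Ω) ≠ 0)
    {Z : Finset Ω} (hZ : ∀ a ∈ Z, aeval a g ≠ 0)
    (hzero : ∀ a ∈ Z, ∀ b, (h : b ^ m = aeval a g) → eval a b h f = 0) : #Z < n := by
  obtain ⟨p, rfl⟩ := mem_regularLT.mp hf
  obtain ⟨j, hj⟩ : ∃ j, (p j : F[X]) ≠ 0 := by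
    by_contra! h
    simp [h] at hf₀
  have hroot (a : Ω) (ha : a ∈ Z) : aeval a (p j : F[X]) = 0 := by
    obtain ⟨b, hb, hbm⟩ := exists_injective_forall_pow_eq hm (hZ a ha)
    refine congrFun (Matrix.eq_zero_of_forall_index_sum_mul_pow_eq_zero
      (v := fun k => aeval a (p k : F[X])) hb fun i => ?_) j
    simpa using hzero a ha (b i) (hbm i)
  by_contra! hn
  refine hj ((Polynomial.map_eq_zero (algebraMap F Ω)).mp
    (eq_zero_of_degree_lt_of_eval_finset_eq_zero Z ?_ fun a ha => ?_))
  · rw [degree_map]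
    exact (mem_degreeLT.mp (p j).2).trans_le (Nat.cast_le.mpr hn)
  · rw [eval_map_algebraMap, hroot a ha]

theorem linearIndependent_mono_mul_mono_pow [Fintype F] (hm : m ≠ 0) (hg : g.coeff 0 = 0)
    (hg' : g.coeff 1 ≠ 0) (t K : ℕ) :
    LinearIndependent F fun nk : Fin (Fintype.card F ^ t) × Fin K =>
      (mono nk.1 * mono nk.2 ^ Fintype.card F ^ t : CurveRing g m) := by
  obtain ⟨ω, hω, hord⟩ := exists_aeval_eq_X_pow hg hg' hm
  have hmono (n : ℕ) : (eval ω PowerSeries.X hω.symm (mono n)).order = n := by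
    simp only [mono, map_mul, map_pow, eval_y, eval_ofPoly, aeval_X, PowerSeries.order_mul,
      PowerSeries.order_pow, PowerSeries.order_X, hord, nsmul_eq_mul, mul_one]
    rw [mul_comm]
    exact_mod_cast Nat.div_add_mod n m
  refine LinearIndependent.of_comp (eval ω PowerSeries.X hω.symm).toLinearMap ?_
  simpa only [Function.comp_def, AlgHom.toLinearMap_apply, map_mul, map_pow] using
    linearIndependent_mul_pow_card_pow hmono t K

/-- `mono k`, with `w` and `y` replaced by `w + α` and `c * y`. -/
noncomputable def twistedMono (α c : F) (k : ℕ) : CurveRing g m :=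
  ofPoly ((X + C α) ^ (k / m) * C (c ^ (k % m))) * y ^ (k % m)

theorem eval_mono_pow {Ω : Type*} [Field Ω] [Algebra F Ω] {a b : Ω} (h : b ^ m = aeval a g)
    {α c : F} {n e : ℕ} (hn : n = m * e + 1) (ha : a ^ n = a + algebraMap F Ω α)
    (hc : aeval a g ^ e = algebraMap F Ω c) (k : ℕ) :
    eval a b h (mono k) ^ n = eval a b h (twistedMono α c k) := by
  have hb : b ^ n = algebraMap F Ω c * b := by rw [hn, pow_succ, pow_mul, h, hc]
  simp only [mono, twistedMono, map_mul, map_pow, eval_y, eval_ofPoly, map_add, aeval_X, aeval_C]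
  rw [mul_pow, ← pow_mul, ← pow_mul, mul_comm _ n, mul_comm _ n, pow_mul, pow_mul, ha, hb, mul_pow,
    mul_assoc]

theorem mod_add_mod_mul_div_le (hm : 0 < m) (i j r : ℕ) : (i % m + j % m * r) / m ≤ r := by
  rw [← Nat.lt_succ_iff]
  refine Nat.div_lt_of_lt_mul ?_
  grw [Nat.mod_lt i hm, (Nat.mod_lt j hm).le]
  rw [Nat.mul_succ, add_comm]

theorem mono_mul_mono_pow_mem_regularLT (hm : 0 < m) {i j r n : ℕ}
    (hn : i / m + r * (j / m) + g.natDegree * r < n) :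
    (mono i * mono j ^ r : CurveRing g m) ∈ regularLT g m n := by
  have hmul : (mono i * mono j ^ r : CurveRing g m) =
      ofPoly (X ^ (i / m + r * (j / m))) * y ^ (i % m + j % m * r) := by
    simp only [mono, map_pow]
    ring
  rw [hmul]
  refine ofPoly_mul_y_pow_mem_regularLT hm (lt_of_le_of_lt ?_ hn)
  grw [natDegree_X_pow, mod_add_mod_mul_div_le hm]

theorem mono_pow_mul_twistedMono_mem_regularLT (hm : 0 < m) (α c : F) {i j r n : ℕ}
    (hn : j / m + r * (i / m) + g.natDegree * r < n) :
    (mono i ^ r * twistedMono α c j : CurveRing g m) ∈ regularLT g m n := by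
  have hmul : (mono i ^ r * twistedMono α c j : CurveRing g m) =
      ofPoly (C (c ^ (j % m)) * ((X + C α) ^ (j / m) * X ^ (r * (i / m)))) *
        y ^ (j % m + i % m * r) := by
    simp only [mono, twistedMono, map_mul, map_pow]
    ring
  rw [hmul]
  refine ofPoly_mul_y_pow_mem_regularLT hm (lt_of_le_of_lt ?_ hn)
  grw [natDegree_C_mul_le, natDegree_mul_le, natDegree_pow_le, natDegree_X_add_C, natDegree_X_pow,
    mod_add_mod_mul_div_le hm, mul_one]

theorem exists_sum_smul_mono_pow_mul_twistedMono_eq_zero (hm : 0 < m) {r : ℕ}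
    (hr : m * (g.natDegree + 1) < r) (α c : F) :
    ∃ b : Fin r × Fin (r + m * g.natDegree + 1) → F, b ≠ 0 ∧
      ∑ nk, b nk • (mono nk.1 ^ r * twistedMono α c nk.2 : CurveRing g m) = 0 := by
  set d := g.natDegree
  set K := r + m * d + 1
  set N := (K - 1) / m + r * ((r - 1) / m) + d * r + 1
  let v (nk : Fin r × Fin K) : regularLT g m N :=
    ⟨mono nk.1 ^ r * twistedMono α c nk.2, mono_pow_mul_twistedMono_mem_regularLT hm α c <| by
      have hk : (nk.2 : ℕ) / m ≤ (K - 1) / m := Nat.div_le_div_right (by lia)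
      have hn : (nk.1 : ℕ) / m ≤ (r - 1) / m := Nat.div_le_div_right (by lia)
      grw [Nat.lt_succ_iff, hk, hn]⟩
  have hdim : Module.finrank F (regularLT g m N) < Module.finrank F (Fin r × Fin K → F) := by
    grw [finrank_regularLT_le]
    simp only [Module.finrank_fintype_fun_eq_card, Fintype.card_prod, Fintype.card_fin, N]
    calc m * ((K - 1) / m + r * ((r - 1) / m) + d * r + 1)
        = m * ((K - 1) / m) + r * (m * ((r - 1) / m)) + m * d * r + m := by ring
      _ ≤ (K - 1) + r * (r - 1) + m * d * r + m := by grw [Nat.mul_div_le, Nat.mul_div_le]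
      _ < r * K := by
        obtain ⟨s, rfl⟩ := Nat.exists_eq_add_of_lt hr
        simp only [K, Nat.add_sub_cancel]
        nlinarith
  obtain ⟨b, hb, hb₀⟩ := (Submodule.ne_bot_iff _).mp
    (LinearMap.ker_ne_bot_of_finrank_lt (f := Fintype.linearCombination F v) hdim)
  refine ⟨b, hb₀, ?_⟩
  simpa [Fintype.linearCombination_apply, v] using congrArg Subtype.val hb

theorem eval_sum_smul_mono_mul_mono_pow_eq_zero [Fintype F] {Ω : Type*} [Field Ω] [Algebra F Ω]
    {t K e : ℕ} (he : (Fintype.card F ^ t) ^ 2 = m * e + 1) {α c : F}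
    {b : Fin (Fintype.card F ^ t) × Fin K → F}
    (hb : ∑ nk, b nk •
      (mono nk.1 ^ Fintype.card F ^ t * twistedMono α c nk.2 : CurveRing g m) = 0)
    {x z : Ω} (h : z ^ m = aeval x g) (hx : x ^ (Fintype.card F ^ t) ^ 2 = x + algebraMap F Ω α)
    (hc : aeval x g ^ e = algebraMap F Ω c) :
    eval x z h (∑ nk, b nk • (mono nk.1 * mono nk.2 ^ Fintype.card F ^ t)) = 0 := by
  have hpow := eval_mono_pow h he hx hc
  refine eq_zero_of_pow_eq_zero (n := Fintype.card F ^ t) ?_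
  calc eval x z h (∑ nk, b nk • (mono nk.1 * mono nk.2 ^ Fintype.card F ^ t)) ^ Fintype.card F ^ t
      = eval x z h (∑ nk, b nk • (mono nk.1 ^ Fintype.card F ^ t * twistedMono α c nk.2)) := by
        simp only [map_sum, map_smul, map_mul, map_pow, sum_smul_pow_card_pow, mul_pow,
          ← pow_mul, ← sq, ← hpow]
    _ = 0 := by rw [hb, map_zero]

theorem natCast_ne_zero_of_card_pow_eq_mul_add_one {F Ω : Type*} [Field F] [Fintype F] [Field Ω]
    [Algebra F Ω] {n m e : ℕ} (hn : n ≠ 0) (he : Fintype.card F ^ n = m * e + 1) :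
    (m : Ω) ≠ 0 := fun hm => by
  have hq : (Fintype.card F : Ω) = 0 := by
    rw [← map_natCast (algebraMap F Ω), FiniteField.cast_card_eq_zero, map_zero]
  simpa [hq, hm, hn] using congrArg (Nat.cast : ℕ → Ω) he

theorem card_mul_le {t e : ℕ} [Fintype F] (hm : 0 < m) (hg : g.coeff 0 = 0) (hg' : g.coeff 1 ≠ 0)
    (hr : m * (g.natDegree + 1) < Fintype.card F ^ t) (he : (Fintype.card F ^ t) ^ 2 = m * e + 1)
    {Ω : Type*} [Field Ω] [IsSepClosed Ω] [Algebra F Ω] {α c : F} (hc : c ≠ 0) {Z : Finset Ω}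
    (hZ : ∀ a ∈ Z, a ^ (Fintype.card F ^ t) ^ 2 = a + algebraMap F Ω α ∧
      aeval a g ^ e = algebraMap F Ω c) :
    m * #Z ≤ (Fintype.card F ^ t) ^ 2 + (2 * m * g.natDegree + 1) * Fintype.card F ^ t := by
  set r := Fintype.card F ^ t
  set d := g.natDegree
  set K := r + m * d + 1
  obtain ⟨b, hb₀, hb⟩ := exists_sum_smul_mono_pow_mul_twistedMono_eq_zero hm hr α c
  set G : CurveRing g m := ∑ nk : Fin r × Fin K, b nk • (mono nk.1 * mono nk.2 ^ r)
  have hG₀ : G ≠ 0 := fun h => hb₀ <| funext <| Fintype.linearIndependent_iff.mp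
    (linearIndependent_mono_mul_mono_pow hm.ne' hg hg' t K) b h
  have hG : G ∈ regularLT g m ((r - 1) / m + r * ((K - 1) / m) + d * r + 1) :=
    sum_mem fun nk _ => Submodule.smul_mem _ _ <| mono_mul_mono_pow_mem_regularLT hm <| by
      have hn : (nk.1 : ℕ) / m ≤ (r - 1) / m := Nat.div_le_div_right (by lia)
      have hk : (nk.2 : ℕ) / m ≤ (K - 1) / m := Nat.div_le_div_right (by lia)
      grw [Nat.lt_succ_iff, hk, hn]
  have hr₁ : 1 < r := lt_of_le_of_lt (by nlinarith) hr
  have he₀ : e ≠ 0 := by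
    rintro rfl
    nlinarith
  have hmΩ : (m : Ω) ≠ 0 := by
    have ht : t ≠ 0 := by rintro rfl; simp [r] at hr₁
    refine natCast_ne_zero_of_card_pow_eq_mul_add_one (F := F) (e := e)
      (mul_ne_zero ht two_ne_zero) ?_
    rw [pow_mul, he]
  have hcard := card_lt_of_mem_regularLT hG hG₀ hmΩ (Z := Z) (fun a ha h => ?_) fun a ha _ h =>
    eval_sum_smul_mono_mul_mono_pow_eq_zero he hb h (hZ a ha).1 (hZ a ha).2
  · calc m * #Z ≤ m * ((r - 1) / m + r * ((K - 1) / m) + d * r) := by gcongr; lia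
      _ = m * ((r - 1) / m) + r * (m * ((K - 1) / m)) + m * d * r := by ring
      _ ≤ (r - 1) + r * (K - 1) + m * d * r := by grw [Nat.mul_div_le, Nat.mul_div_le]
      _ ≤ r ^ 2 + (2 * m * d + 1) * r := by
        grw [Nat.sub_le r 1]
        simp only [K, Nat.add_sub_cancel]
        exact le_of_eq (by ring)
  · exact hc ((map_eq_zero (algebraMap F Ω)).mp (by rw [← (hZ a ha).2, h, zero_pow he₀]))

end CurveRing
end Curve

section Count
variable {F : Type*} [Field F] [Fintype F]

theorem pow_card_pow_eq_add_sum {R : Type*} [CommRing R] [Algebra F R] {w z : R}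
    (h : w ^ Fintype.card F = w + z) (k : ℕ) :
    w ^ Fintype.card F ^ k = w + ∑ i ∈ range k, z ^ Fintype.card F ^ i := by
  induction k with
  | zero => simp
  | succ k ih =>
    rw [pow_succ', pow_mul, h, ← frobeniusAlgHom_pow_apply (F := F), map_add,
      frobeniusAlgHom_pow_apply, frobeniusAlgHom_pow_apply, ih, sum_range_succ, add_assoc]

theorem exists_pow_eq_add {Ω : Type*} [Field Ω] [IsAlgClosed Ω] {q : ℕ} (hq : 1 < q) (z : Ω) :
    ∃ w : Ω, w ^ q = w + z := by
  have hdeg : (X ^ q - X - C z).natDegree = q := by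
    rw [natDegree_sub_C, FiniteField.X_pow_card_sub_X_natDegree_eq _ hq]
  obtain ⟨w, hw⟩ := IsAlgClosed.exists_root (X ^ q - X - C z)
    (by rw [degree_eq_natDegree (ne_zero_of_natDegree_gt (hdeg ▸ hq)), hdeg]
        exact_mod_cast (by lia))
  refine ⟨w, ?_⟩
  simp only [IsRoot.def, eval_sub, eval_pow, eval_X, eval_C] at hw
  linear_combination hw

variable (F) in
/-- With `q = #F`, the polynomial `u * (u - 2) ^ (q - 2)` in `u = w ^ q - w`. Where
`w ^ q - w = s + 1`, it takes the value `(s + 1) * (s - 1) ^ (q - 2)`, whose norm to `F` is that of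
`(s + 1) / (s - 1)`. -/
noncomputable def normPoly : F[X] :=
  (X ^ Fintype.card F - X) * (X ^ Fintype.card F - X - C 2) ^ (Fintype.card F - 2)

theorem natDegree_normPoly : (normPoly F).natDegree = Fintype.card F * (Fintype.card F - 1) := by
  have hq := Fintype.one_lt_card (α := F)
  have hU := FiniteField.X_pow_card_sub_X_natDegree_eq F hq
  have hU₂ : (X ^ Fintype.card F - X - C 2 : F[X]).natDegree = Fintype.card F := by
    rw [natDegree_sub_C, hU]
  rw [normPoly, natDegree_mul (ne_zero_of_natDegree_gt (hU ▸ hq))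
    (pow_ne_zero _ (ne_zero_of_natDegree_gt (hU₂ ▸ hq))), natDegree_pow, hU, hU₂]
  obtain ⟨k, hk⟩ := Nat.exists_eq_add_of_le hq
  rw [hk, show 1 + 1 + k - 2 = k by lia, show 1 + 1 + k - 1 = 1 + k by lia]
  ring

theorem coeff_zero_normPoly : (normPoly F).coeff 0 = 0 := by
  have hq := Fintype.card_ne_zero (α := F)
  simp [normPoly, coeff_zero_eq_eval_zero, hq]

theorem coeff_one_normPoly_ne_zero (h2 : (2 : F) ≠ 0) : (normPoly F).coeff 1 ≠ 0 := by
  have hq := Fintype.card_ne_zero (α := F)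
  have hderiv : (normPoly F).coeff 1 = (derivative (normPoly F)).eval 0 := by
    rw [← coeff_zero_eq_eval_zero, coeff_derivative]
    simp
  rw [hderiv, normPoly]
  simp [derivative_X_pow, hq, h2]

variable {L Ω : Type*} [Field L] [Algebra F L] [Field Ω] [Algebra F Ω] [Algebra L Ω]
  [IsScalarTower F L Ω]

theorem add_algebraMap_pow_card_eq (a : F) {w z : Ω} (h : w ^ Fintype.card F = w + z) :
    (w + algebraMap F Ω a) ^ Fintype.card F = w + algebraMap F Ω a + z := by
  have hfrob := map_add (FiniteField.frobeniusAlgHom F Ω) w (algebraMap F Ω a)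
  simp only [AlgHom.commutes, FiniteField.coe_frobeniusAlgHom, h] at hfrob
  rw [hfrob, add_right_comm]

theorem pow_card_pow_finrank_eq_add_trace [Finite L] {w : Ω} {s : L}
    (h : w ^ Fintype.card F = w + algebraMap L Ω s) :
    w ^ Fintype.card F ^ Module.finrank F L = w + algebraMap F Ω (Algebra.trace F L s) := by
  rw [pow_card_pow_eq_add_sum h, IsScalarTower.algebraMap_apply F L Ω,
    FiniteField.algebraMap_trace_eq_sum_pow, map_sum, Nat.card_eq_fintype_card]
  simp only [map_pow]

theorem aeval_normPoly_pow_eq_norm [Finite L] {w : Ω} {s : L}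
    (h : w ^ Fintype.card F = w + algebraMap L Ω (s + 1)) :
    aeval w (normPoly F) ^ (∑ i ∈ range (Module.finrank F L), Fintype.card F ^ i) =
      algebraMap F Ω (Algebra.norm F (s + 1) * Algebra.norm F (s - 1) ^ (Fintype.card F - 2)) := by
  have haeval : aeval w (normPoly F) =
      algebraMap L Ω ((s + 1) * (s - 1) ^ (Fintype.card F - 2)) := by
    simp only [normPoly, map_mul, map_pow, map_sub, map_add, map_one, aeval_X, h,
      map_ofNat]
    ring
  rw [haeval, ← map_pow, ← map_pow, ← map_mul, IsScalarTower.algebraMap_apply F L Ω,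
    FiniteField.algebraMap_norm_eq_pow_sum, Nat.card_eq_fintype_card]

theorem card_norm_trace_fiber_le [Fintype L] (h2 : (2 : F) ≠ 0) {t : ℕ} (ht : 3 ≤ t)
    (hL : Module.finrank F L = 2 * t) {c : F} (hc : c ≠ 0) (α : F) :
    (Fintype.card F - 1) * (Fintype.card F * #{s : L | Algebra.norm F (s + 1) *
      Algebra.norm F (s - 1) ^ (Fintype.card F - 2) = c ∧ Algebra.trace F L s = α}) ≤
    (Fintype.card F ^ t) ^ 2 + (2 * (Fintype.card F - 1) * (Fintype.card F * (Fintype.card F - 1))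
      + 1) * Fintype.card F ^ t := by
  set q := Fintype.card F
  have hq : 1 < q := Fintype.one_lt_card
  set A : Finset L := {s : L | Algebra.norm F (s + 1) *
      Algebra.norm F (s - 1) ^ (q - 2) = c ∧ Algebra.trace F L s = α}
  let Ω := AlgebraicClosure L
  choose w hw using fun s : L => exists_pow_eq_add hq (algebraMap L Ω (s + 1))
  have hwa (p : L × F) := add_algebraMap_pow_card_eq p.2 (hw p.1)
  have hinj : Function.Injective fun p : L × F => w p.1 + algebraMap F Ω p.2 := by
    rintro ⟨s, a⟩ ⟨s', a'⟩ (h : w s + algebraMap F Ω a = w s' + algebraMap F Ω a')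
    obtain rfl : s = s' := by
      have := hwa (s, a)
      rw [h, hwa (s', a')] at this
      simpa using this.symm
    simpa using h
  let Z : Finset Ω := (A ×ˢ univ).map ⟨_, hinj⟩
  have hZ : #Z = q * #A := by rw [card_map, card_product, card_univ, mul_comm]
  have he : (q ^ t) ^ 2 = (q - 1) * ∑ i ∈ range (2 * t), q ^ i + 1 := by
    rw [mul_comm, geom_sum_mul_of_one_le hq.le, ← pow_mul, mul_comm t,
      Nat.sub_add_cancel (Nat.one_le_pow _ _ hq.pos)]
  have hdeg : (q - 1) * ((normPoly F).natDegree + 1) < q ^ t := by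
    refine lt_of_lt_of_le ?_ (Nat.pow_le_pow_right hq.pos ht)
    rw [natDegree_normPoly]
    obtain ⟨k, hk⟩ := Nat.exists_eq_add_of_le hq
    change (q - 1) * (q * (q - 1) + 1) < q ^ 3
    rw [hk, show 1 + 1 + k - 1 = k + 1 by lia]
    nlinarith
  rw [← hZ, ← natDegree_normPoly]
  refine CurveRing.card_mul_le (Nat.sub_pos_of_lt hq) coeff_zero_normPoly
    (coeff_one_normPoly_ne_zero h2) hdeg he (α := Algebra.trace F L 1 + α) hc fun z hz => ?_
  obtain ⟨⟨s, a⟩, hs, rfl⟩ := mem_map.mp hz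
  obtain ⟨hnorm, htrace⟩ : _ ∧ _ := by simpa [A] using hs
  refine ⟨?_, ?_⟩
  · rw [← pow_mul, mul_comm t, ← hL, ← htrace, ← map_add, add_comm 1]
    exact pow_card_pow_finrank_eq_add_trace (hwa (s, a))
  · rw [← hL, ← hnorm]
    exact aeval_normPoly_pow_eq_norm (hwa (s, a))

end Count

end Polynomial

section QuadraticStep
variable {K R : Type*} [Field K] [CommRing R]

/-- The lift of an additive character along the trace. -/
noncomputable def traceLift (L : Type*) [CommRing L] [Algebra K L] (ψ : AddChar K R) :
    AddChar L R :=
  ψ.compAddMonoidHom (Algebra.trace K L).toAddMonoidHom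

/-- The lift of a multiplicative character along the norm. -/
noncomputable def normLift (L : Type*) [Field L] [Algebra K L] [FiniteDimensional K L]
    (χ : MulChar K R) : MulChar L R where
  toMonoidHom := χ.toMonoidHom.comp (Algebra.norm K)
  map_nonunit' x hx := by
    rw [isUnit_iff_ne_zero, not_not] at hx
    rw [hx]
    simpa using χ.map_zero

@[simp] theorem traceLift_apply {L : Type*} [CommRing L] [Algebra K L] (ψ : AddChar K R) (x : L) :
    traceLift L ψ x = ψ (Algebra.trace K L x) := rfl

section normLift
variable {L : Type*} [Field L] [Algebra K L] [FiniteDimensional K L]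

@[simp] theorem normLift_apply (χ : MulChar K R) (x : L) :
    normLift L χ x = χ (Algebra.norm K x) := rfl

theorem normLift_inv (χ : MulChar K R) : (normLift L χ)⁻¹ = normLift L χ⁻¹ := by
  ext x
  rw [MulChar.inv_apply', normLift_apply, normLift_apply, MulChar.inv_apply', Algebra.norm_inv]

end normLift

theorem trace_quadraticAlgebra {d : K} (z : QuadraticAlgebra K d 0) :
    Algebra.trace K (QuadraticAlgebra K d 0) z = 2 * z.re := by
  rw [Algebra.trace_eq_matrix_trace (QuadraticAlgebra.basis d 0) z, Matrix.trace_fin_two,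
    Algebra.leftMulMatrix_eq_repr_mul, Algebra.leftMulMatrix_eq_repr_mul]
  simp [QuadraticAlgebra.basis, two_mul]

theorem norm_quadraticAlgebra {d : K} (z : QuadraticAlgebra K d 0) :
    Algebra.norm K z = z.re ^ 2 - d * z.im ^ 2 := by
  rw [show Algebra.norm K z = z.norm from QuadraticAlgebra.det_toLinearMap_eq_norm z,
    QuadraticAlgebra.norm_def]
  ring

/-- The summand of a product of two Cayley sums at `s` and `t`, in terms of `T = s + t` and
`n = s * t`. -/
noncomputable def pairTerm (ψ : AddChar K R) (χ : MulChar K R) (T n : K) : R :=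
  χ (n + T + 1) * χ⁻¹ (n - T + 1) * ψ T

variable [Fintype K]

/-- The Rudnick sum in the Cayley coordinate `s = (x + 1) / (x - 1)`, up to the factor `-1 / √q`:
the excluded points `x = 0, 1` correspond to `s = -1, ∞`, and the factor `χ⁻¹ (s - 1)` removes the
extraneous point `s = 1`. -/
noncomputable def cayleySum (ψ : AddChar K R) (χ : MulChar K R) : R :=
  ∑ s, χ (s + 1) * χ⁻¹ (s - 1) * ψ s

theorem sum_comp_sq (hK : ringChar K ≠ 2) (f : K → R) :
    ∑ e, f (e ^ 2) = ∑ D, (quadraticChar K D + 1 : ℤ) * f D := by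
  rw [← sum_fiberwise (s := univ) (g := fun e : K => e ^ 2)]
  refine sum_congr rfl fun D _ => ?_
  rw [sum_congr rfl fun e he => by rw [(mem_filter.mp he).2], sum_const, nsmul_eq_mul,
    ← quadraticChar_card_sqrts hK D, Int.cast_natCast]
  simp

theorem sum_comp_sq_add_sum_comp_mul_sq (hK : ringChar K ≠ 2) {d : K} (hd : ¬IsSquare d)
    (f : K → R) : ∑ e, f (e ^ 2) + ∑ b, f (d * b ^ 2) = 2 * ∑ D, f D := by
  have hd₀ : d ≠ 0 := fun h => hd (h ▸ IsSquare.zero)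
  have hnonsq : ∑ D, (quadraticChar K D + 1 : ℤ) * f (d * D) =
      ∑ D, (1 - quadraticChar K D : ℤ) * f D := by
    refine Fintype.sum_equiv (Equiv.mulLeft₀ d hd₀) _ _ fun D => ?_
    rw [Equiv.mulLeft₀_apply, map_mul, quadraticChar_neg_one_iff_not_isSquare.mpr hd]
    ring_nf
  rw [sum_comp_sq hK, sum_comp_sq hK fun D => f (d * D), hnonsq, ← sum_add_distrib, mul_sum]
  refine sum_congr rfl fun D _ => ?_
  push_cast
  ring

theorem sum_pairTerm [IsDomain R] (hK : ringChar K ≠ 2) {ψ : AddChar K R} (hψ : ψ ≠ 1)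
    {χ : MulChar K R} (hχ : χ ≠ 1) :
    ∑ a, ∑ n, pairTerm ψ χ (2 * a) n = Fintype.card K := by
  have h2 : (2 : K) ≠ 0 := Ring.two_ne_zero hK
  have hφ : ψ.mulShift (1 / 2) ≠ 1 := AddChar.IsPrimitive.of_ne_one hψ (by simp [h2])
  rw [← gaussSum_mul_gaussSum_eq_card hχ (AddChar.IsPrimitive.of_ne_one hφ), gaussSum, gaussSum,
    Fintype.sum_mul_sum, ← Fintype.sum_prod_type', ← Fintype.sum_prod_type']
  refine Fintype.sum_equiv
    ⟨fun p => (p.2 + 2 * p.1 + 1, p.2 - 2 * p.1 + 1),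
      fun p => ((p.1 - p.2) / 4, (p.1 + p.2) / 2 - 1), fun p => ?_, fun p => ?_⟩ _ _ fun p => ?_
  · have h4 : (4 : K) ≠ 0 := by simpa [show (4 : K) = 2 * 2 by norm_num] using h2
    ext <;> field_simp <;> ring
  · have h4 : (4 : K) ≠ 0 := by simpa [show (4 : K) = 2 * 2 by norm_num] using h2
    ext <;> field_simp <;> ring
  · simp only [pairTerm, Equiv.coe_fn_mk, AddChar.inv_apply, AddChar.mulShift_apply]
    rw [mul_mul_mul_comm, ← AddChar.map_add_eq_mul]
    congr 2
    field_simp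
    ring

theorem cayleySum_sq (h2 : (2 : K) ≠ 0) (ψ : AddChar K R) (χ : MulChar K R) :
    cayleySum ψ χ ^ 2 = ∑ a, ∑ e, pairTerm ψ χ (2 * a) (a ^ 2 - e ^ 2) := by
  rw [sq, cayleySum, Fintype.sum_mul_sum, ← Fintype.sum_prod_type', ← Fintype.sum_prod_type']
  refine Fintype.sum_equiv
    ⟨fun p => ((p.1 + p.2) / 2, (p.1 - p.2) / 2), fun p => (p.1 + p.2, p.1 - p.2),
      fun p => ?_, fun p => ?_⟩ _ _ fun ⟨s, t⟩ => ?_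
  · ext <;> field_simp <;> ring
  · ext <;> field_simp <;> ring
  · have hT : 2 * ((s + t) / 2) = s + t := by field_simp
    have hn : ((s + t) / 2) ^ 2 - ((s - t) / 2) ^ 2 = s * t := by field_simp; ring
    simp only [Equiv.coe_fn_mk, pairTerm, hT, hn, AddChar.map_add_eq_mul]
    rw [show s * t + (s + t) + 1 = (s + 1) * (t + 1) by ring,
      show s * t - (s + t) + 1 = (s - 1) * (t - 1) by ring, map_mul, map_mul]
    ring

section Quadratic
variable {d : K} [Fact (∀ r : K, r ^ 2 ≠ d + 0 * r)] [Fintype (QuadraticAlgebra K d 0)]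

theorem cayleySum_quadraticAlgebra (ψ : AddChar K R) (χ : MulChar K R) :
    cayleySum (traceLift (QuadraticAlgebra K d 0) ψ) (normLift (QuadraticAlgebra K d 0) χ) =
      ∑ a, ∑ b, pairTerm ψ χ (2 * a) (a ^ 2 - d * b ^ 2) := by
  rw [cayleySum, ← Fintype.sum_prod_type']
  refine Fintype.sum_equiv (QuadraticAlgebra.equivProd d 0) _ _ fun z => ?_
  have hz : QuadraticAlgebra.equivProd d 0 z = (z.re, z.im) := rfl
  simp only [normLift_inv, normLift_apply, traceLift_apply, trace_quadraticAlgebra,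
    norm_quadraticAlgebra, pairTerm, hz, QuadraticAlgebra.re_add, QuadraticAlgebra.im_add,
    QuadraticAlgebra.re_sub, QuadraticAlgebra.im_sub, QuadraticAlgebra.re_one,
    QuadraticAlgebra.im_one]
  ring_nf

theorem cayleySum_sq_add_cayleySum_quadraticAlgebra [IsDomain R] (hK : ringChar K ≠ 2)
    {ψ : AddChar K R} (hψ : ψ ≠ 1) {χ : MulChar K R} (hχ : χ ≠ 1) :
    cayleySum ψ χ ^ 2 +
      cayleySum (traceLift (QuadraticAlgebra K d 0) ψ) (normLift (QuadraticAlgebra K d 0) χ) =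
      2 * Fintype.card K := by
  have hd : ¬IsSquare d := fun ⟨r, hr⟩ =>
    (Fact.out : ∀ r : K, r ^ 2 ≠ d + 0 * r) r (by rw [hr]; ring)
  rw [cayleySum_sq (Ring.two_ne_zero hK), cayleySum_quadraticAlgebra, ← sum_add_distrib,
    ← sum_pairTerm hK hψ hχ, mul_sum]
  refine sum_congr rfl fun a _ => ?_
  rw [sum_comp_sq_add_sum_comp_mul_sq hK hd fun D => pairTerm ψ χ (2 * a) (a ^ 2 - D)]
  exact congrArg _ (Fintype.sum_equiv (Equiv.subLeft (a ^ 2)) _ _ fun D => rfl)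

end Quadratic
end QuadraticStep

section Bound

theorem norm_mulChar_apply {F : Type*} [Field F] [Finite F] (χ : MulChar F ℂ) {x : F}
    (hx : x ≠ 0) : ‖χ x‖ = 1 :=
  have := Fintype.ofFinite F
  Complex.norm_eq_one_of_mem_rootsOfUnity (χ.apply_mem_rootsOfUnity (Units.mk0 x hx))

theorem card_le_card_norm_mul_norm_pow_ne_zero_add_two (F L : Type*) [Field F] [Field L]
    [Fintype L] [Algebra F L] (n : ℕ) :
    Fintype.card L ≤
      #{s : L | Algebra.norm F (s + 1) * Algebra.norm F (s - 1) ^ n ≠ 0} + 2 := by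
  have hzeros : ({s : L | ¬Algebra.norm F (s + 1) * Algebra.norm F (s - 1) ^ n ≠ 0} : Finset L) ⊆
      {-1, 1} := fun s hs => by
    have hs' : s + 1 = 0 ∨ s - 1 = 0 ∧ n ≠ 0 := by simpa [or_iff_not_imp_left] using hs
    simpa [eq_neg_iff_add_eq_zero, sub_eq_zero] using hs'.imp_right And.left
  rw [← card_univ, ← card_filter_add_card_filter_not (s := univ)
    (fun s : L => Algebra.norm F (s + 1) * Algebra.norm F (s - 1) ^ n ≠ 0)]
  grw [card_le_card hzeros, card_le_two]

variable {F : Type*} [Field F] [Fintype F]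

theorem inv_eq_pow_card_sub_two (h2 : (2 : F) ≠ 0) (x : F) : x⁻¹ = x ^ (Fintype.card F - 2) := by
  have hq : 2 < Fintype.card F := by
    refine lt_of_le_of_ne Fintype.one_lt_card fun h => h2 ?_
    exact_mod_cast h ▸ FiniteField.cast_card_eq_zero F
  rcases eq_or_ne x 0 with rfl | hx
  · rw [inv_zero, zero_pow (by lia)]
  · refine inv_eq_of_mul_eq_one_right ?_
    rw [← pow_succ', show Fintype.card F - 2 + 1 = Fintype.card F - 1 by lia,
      FiniteField.pow_card_sub_one_eq_one x hx]

variable {L : Type*} [Field L] [Fintype L] [Algebra F L]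

theorem cayleySum_lift (h2 : (2 : F) ≠ 0) (ψ : AddChar F ℂ) (χ : MulChar F ℂ) :
    cayleySum (traceLift L ψ) (normLift L χ) =
      ∑ s : L, χ (Algebra.norm F (s + 1) * Algebra.norm F (s - 1) ^ (Fintype.card F - 2)) *
        ψ (Algebra.trace F L s) := by
  refine sum_congr rfl fun s _ => ?_
  rw [MulChar.inv_apply', normLift_apply, normLift_apply, traceLift_apply, ← map_mul,
    Algebra.norm_inv, inv_eq_pow_card_sub_two h2]

theorem norm_cayleySum_lift_le (h2 : (2 : F) ≠ 0) {t : ℕ} (ht : 3 ≤ t)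
    (hL : Module.finrank F L = 2 * t) {ψ : AddChar F ℂ} (hψ : ψ ≠ 1) (χ : MulChar F ℂ) :
    ‖cayleySum (traceLift L ψ) (normLift L χ)‖ ≤
      ((2 * (Fintype.card F - 1) * (Fintype.card F * (Fintype.card F - 1)) + 1) *
        Fintype.card F ^ t + 2 : ℕ) := by
  set q := Fintype.card F
  let g (s : L) : F × F :=
    (Algebra.norm F (s + 1) * Algebra.norm F (s - 1) ^ (q - 2), Algebra.trace F L s)
  let B : Finset L := {s | (g s).1 ≠ 0}
  let P : Finset (F × F) := {0}ᶜ ×ˢ univ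
  let a (p : F × F) : ℂ := χ p.1 * ψ p.2
  have hsum : cayleySum (traceLift L ψ) (normLift L χ) = ∑ s ∈ B, a (g s) := by
    rw [cayleySum_lift h2]
    refine (sum_filter_of_ne (p := fun s => (g s).1 ≠ 0) fun s _ hs h => hs ?_).symm
    change χ (g s).1 * _ = 0
    rw [h, χ.map_zero, zero_mul]
  have hP : ∑ p ∈ P, a p = 0 := by
    simp only [P, a, sum_product, ← mul_sum, AddChar.sum_eq_zero_of_ne_one hψ, mul_zero,
      sum_const_zero]
  have hPcard : #P = (q - 1) * q := by
    rw [card_product, card_compl, card_singleton, card_univ]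
  have hBcard : (q ^ t) ^ 2 ≤ #B + 2 := by
    rw [← pow_mul, mul_comm, ← hL, ← Module.card_eq_pow_finrank]
    exact card_le_card_norm_mul_norm_pow_ne_zero_add_two F L (q - 2)
  rw [hsum]
  refine norm_sum_comp_le_of_card_fiber_le (P := P) (fun s hs => ?_) (fun p hp => ?_) hP ?_
  · simpa [P, B] using hs
  · have hp₀ : p.1 ≠ 0 := by simpa [P] using hp
    rw [norm_mul, norm_mulChar_apply χ hp₀, AddChar.norm_apply, one_mul]
  · intro p hp
    have hp₀ : p.1 ≠ 0 := by simpa [P] using hp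
    have hfib := card_norm_trace_fiber_le h2 ht hL hp₀ p.2
    have hsub : #{s ∈ B | g s = p} ≤ #{s : L | Algebra.norm F (s + 1) *
        Algebra.norm F (s - 1) ^ (q - 2) = p.1 ∧ Algebra.trace F L s = p.2} :=
      card_le_card fun s hs => by
        obtain ⟨-, rfl⟩ := mem_filter.mp hs
        simp [g]
    rw [hPcard]
    grw [hsub, mul_assoc, hfib, hBcard]
    lia

end Bound

section Tower

/-- The Rudnick sum `E` in the Cayley coordinate: `cayleySum` with the factor `-1 / √q`, in which
the quadratic extension acts by `z ↦ z ^ 2 - 2`. -/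
noncomputable def normalizedCayleySum {K : Type*} [Field K] [Fintype K] (ψ : AddChar K ℂ)
    (χ : MulChar K ℂ) : ℂ :=
  -(1 / (Real.sqrt (Fintype.card K) : ℂ)) * cayleySum ψ χ

theorem normLift_ne_one {F R : Type*} [Field F] [CommRing R] (L : Type*) [Field L] [Finite L]
    [Algebra F L] {χ : MulChar F R} (hχ : χ ≠ 1) : normLift L χ ≠ 1 := by
  obtain ⟨x, hx⟩ := MulChar.ne_one_iff.mp hχ
  obtain ⟨y, rfl⟩ := FiniteField.unitsMap_norm_surjective F L x
  exact MulChar.ne_one_iff.mpr ⟨y, hx⟩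

theorem traceLift_ne_one {F R : Type*} [Field F] [Finite F] [CommRing R] (L : Type*) [Field L]
    [Finite L] [Algebra F L] {ψ : AddChar F R} (hψ : ψ ≠ 1) : traceLift L ψ ≠ 1 := by
  obtain ⟨x, hx⟩ := AddChar.ne_one_iff.mp hψ
  obtain ⟨y, rfl⟩ := Algebra.trace_surjective F L x
  exact AddChar.ne_one_iff.mpr ⟨y, hx⟩

universe u
variable {F : Type u} [Field F] [Fintype F]

theorem normalizedCayleySum_quadraticAlgebra (hF : ringChar F ≠ 2) {d : F}
    [Fact (∀ r : F, r ^ 2 ≠ d + 0 * r)] [Fintype (QuadraticAlgebra F d 0)]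
    {ψ : AddChar F ℂ} (hψ : ψ ≠ 1) {χ : MulChar F ℂ} (hχ : χ ≠ 1) :
    normalizedCayleySum (traceLift (QuadraticAlgebra F d 0) ψ)
      (normLift (QuadraticAlgebra F d 0) χ) = normalizedCayleySum ψ χ ^ 2 - 2 := by
  have hcard : (Fintype.card (QuadraticAlgebra F d 0) : ℝ) = (Fintype.card F : ℝ) ^ 2 := by
    rw [Module.card_eq_pow_finrank (K := F), QuadraticAlgebra.finrank_eq_two, Nat.cast_pow]
  have hq : (Real.sqrt (Fintype.card F) : ℂ) ^ 2 = Fintype.card F := by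
    exact_mod_cast Real.sq_sqrt (Nat.cast_nonneg _)
  have hq₀ : (Fintype.card F : ℂ) ≠ 0 := Nat.cast_ne_zero.mpr Fintype.card_ne_zero
  rw [normalizedCayleySum, normalizedCayleySum, hcard, Real.sqrt_sq (Nat.cast_nonneg _),
    eq_sub_of_add_eq' (cayleySum_sq_add_cayleySum_quadraticAlgebra (d := d) hF hψ hχ), mul_pow,
    neg_sq, div_pow, hq, Complex.ofReal_natCast]
  field_simp
  ring

theorem exists_finrank_eq_two_pow_normalizedCayleySum_eq_iterate (hF : ringChar F ≠ 2)
    {ψ : AddChar F ℂ} (hψ : ψ ≠ 1) {χ : MulChar F ℂ} (hχ : χ ≠ 1) (k : ℕ) :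
    ∃ (L : Type u) (_ : Field L) (_ : Fintype L) (_ : Algebra F L),
      Module.finrank F L = 2 ^ k ∧ normalizedCayleySum (traceLift L ψ) (normLift L χ) =
        (fun w : ℂ => w ^ 2 - 2)^[k] (normalizedCayleySum ψ χ) := by
  induction k with
  | zero =>
    have hψF : traceLift F ψ = ψ := by ext x; simp
    have hχF : normLift F χ = χ := by ext x; simp [Algebra.norm_self]
    exact ⟨F, inferInstance, inferInstance, inferInstance, by simp, by rw [hψF, hχF]; rfl⟩
  | succ k ih =>
    obtain ⟨L, _, _, _, hfin, hL⟩ := ih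
    have hchar : ringChar L ≠ 2 := by rwa [← Algebra.ringChar_eq F L]
    obtain ⟨d, hd⟩ := FiniteField.exists_nonsquare hchar
    have : Fact (∀ r : L, r ^ 2 ≠ d + 0 * r) := ⟨fun r h => hd ⟨r, by linear_combination -h⟩⟩
    let M := QuadraticAlgebra L d 0
    let : Fintype M := Fintype.ofEquiv _ (QuadraticAlgebra.equivProd d 0).symm
    have hψM : traceLift M ψ = traceLift M (traceLift L ψ) := by
      ext x; simp [Algebra.trace_trace]
    have hχM : normLift M χ = normLift M (normLift L χ) := by
      ext x; simp [Algebra.norm_norm]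
    refine ⟨M, inferInstance, inferInstance, inferInstance, ?_, ?_⟩
    · rw [← Module.finrank_mul_finrank F L, hfin, QuadraticAlgebra.finrank_eq_two, pow_succ]
    · rw [hψM, hχM, normalizedCayleySum_quadraticAlgebra hchar (traceLift_ne_one L hψ)
        (normLift_ne_one L hχ), hL, Function.iterate_succ_apply']

theorem norm_normalizedCayleySum_lift_le {L : Type*} [Field L] [Fintype L] [Algebra F L]
    (h2 : (2 : F) ≠ 0) {t : ℕ} (ht : 3 ≤ t) (hL : Module.finrank F L = 2 * t) {ψ : AddChar F ℂ}
    (hψ : ψ ≠ 1) (χ : MulChar F ℂ) :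
    ‖normalizedCayleySum (traceLift L ψ) (normLift L χ)‖ ≤
      (2 * (Fintype.card F - 1) * (Fintype.card F * (Fintype.card F - 1)) + 3 : ℕ) := by
  have hr : 0 < Fintype.card F ^ t := pow_pos Fintype.card_pos t
  have hcard : (Fintype.card L : ℝ) = (Fintype.card F ^ t : ℕ) ^ 2 := by
    rw [Module.card_eq_pow_finrank (K := F), hL, mul_comm, pow_mul]
    push_cast
    rfl
  rw [normalizedCayleySum, hcard, Real.sqrt_sq (Nat.cast_nonneg _), norm_mul, norm_neg, norm_div,
    norm_one, Complex.ofReal_natCast, Complex.norm_natCast, one_div,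
    inv_mul_le_iff₀ (Nat.cast_pos.mpr hr)]
  refine (norm_cayleySum_lift_le h2 ht hL hψ χ).trans ?_
  norm_cast
  nlinarith

theorem norm_normalizedCayleySum_le_two (hF : ringChar F ≠ 2) {ψ : AddChar F ℂ} (hψ : ψ ≠ 1)
    {χ : MulChar F ℂ} (hχ : χ ≠ 1) : ‖normalizedCayleySum ψ χ‖ ≤ 2 := by
  refine norm_le_two_of_eventually_norm_iterate_sq_sub_two_le
    (C := (2 * (Fintype.card F - 1) * (Fintype.card F * (Fintype.card F - 1)) + 3 : ℕ))
    (Filter.eventually_atTop.mpr ⟨3, fun k hk => ?_⟩)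
  obtain ⟨L, _, _, _, hfin, hL⟩ :=
    exists_finrank_eq_two_pow_normalizedCayleySum_eq_iterate hF hψ hχ k
  obtain ⟨j, rfl⟩ := Nat.exists_eq_add_of_le' hk
  have ht : 3 ≤ 2 ^ (j + 2) := by
    rw [pow_add]
    linarith [Nat.one_le_two_pow (n := j)]
  rw [← hL]
  exact norm_normalizedCayleySum_lift_le (Ring.two_ne_zero hF) ht (by rw [hfin]; ring) hψ χ

end Tower

section Cayley
variable {F : Type*} [Field F] [Fintype F]

theorem conj_cayleySum (ψ : AddChar F ℂ) (χ : MulChar F ℂ) :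
    (starRingEnd ℂ) (cayleySum ψ χ) = cayleySum ψ χ := by
  rw [cayleySum, map_sum]
  refine Fintype.sum_equiv (Equiv.neg F) _ _ fun s => ?_
  have hχ (x : F) : (starRingEnd ℂ) (χ x) = χ⁻¹ x := χ.star_apply' x
  have hχ' (x : F) : (starRingEnd ℂ) (χ⁻¹ x) = χ x := by rw [← hχ, Complex.conj_conj]
  have hneg : χ⁻¹ (s + 1) * χ (s - 1) = χ (-s + 1) * χ⁻¹ (-s - 1) := by
    rw [MulChar.inv_apply', MulChar.inv_apply', ← map_mul, ← map_mul]
    congr 1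
    rw [← neg_add', inv_neg]
    ring
  rw [map_mul, map_mul, ← AddChar.map_neg_eq_conj, hχ, hχ', Equiv.neg_apply, hneg]

theorem conj_normalizedCayleySum (ψ : AddChar F ℂ) (χ : MulChar F ℂ) :
    (starRingEnd ℂ) (normalizedCayleySum ψ χ) = normalizedCayleySum ψ χ := by
  rw [normalizedCayleySum, map_mul, conj_cayleySum]
  simp

theorem rudnickSum_eq_normalizedCayleySum (h2 : (2 : F) ≠ 0) (ψ : AddChar F ℂ) (χ : Fˣ →* ℂˣ) :
    rudnickSum ψ χ = normalizedCayleySum ψ (MulChar.ofUnitHom χ) := by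
  rw [rudnickSum, normalizedCayleySum]
  congr 1
  refine sum_of_injOn (fun x => ((x : F) + 1) / (x - 1)) (fun x hx y hy hxy => ?_)
    (fun _ _ => mem_coe.mpr (mem_univ _)) (fun s _ hs => ?_) fun x hx => ?_
  · have hx₁ : (x : F) - 1 ≠ 0 := sub_ne_zero.mpr (by simpa using hx)
    have hy₁ : (y : F) - 1 ≠ 0 := sub_ne_zero.mpr (by simpa using hy)
    rw [div_eq_div_iff hx₁ hy₁] at hxy
    exact Units.ext (mul_left_cancel₀ h2 (by linear_combination -hxy))
  · contrapose! hs
    have hs₁ : s + 1 ≠ 0 := fun h => hs (by rw [h, MulChar.map_zero, zero_mul, zero_mul])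
    have hs₂ : s - 1 ≠ 0 := fun h => hs (by rw [h, MulChar.map_zero, mul_zero, zero_mul])
    have hx : (s + 1) / (s - 1) - 1 = 2 / (s - 1) := by field_simp; ring
    refine ⟨Units.mk0 ((s + 1) / (s - 1)) (div_ne_zero hs₁ hs₂), ?_, ?_⟩
    · have hx₁ : (s + 1) / (s - 1) - 1 ≠ 0 := hx ▸ div_ne_zero h2 hs₂
      exact mem_coe.mpr (mem_filter.mpr ⟨mem_univ _, sub_ne_zero.mp hx₁⟩)
    · beta_reduce
      rw [Units.val_mk0, hx]
      field_simp
      ring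
  · have hx₁ : (x : F) - 1 ≠ 0 := sub_ne_zero.mpr (by simpa using hx)
    have hx₂ : ((x : F) + 1) / (x - 1) + 1 = 2 * x / (x - 1) := by field_simp; ring
    have hx₃ : ((x : F) + 1) / (x - 1) - 1 = 2 / (x - 1) := by field_simp; ring
    rw [hx₂, hx₃, MulChar.inv_apply', ← map_mul, ← MulChar.ofUnitHom_coe]
    congr 2
    field_simp

end Cayley
end RudnickSum

/-- **Reality and bound for Rudnick sums.** For every finite field `F_q` of odd
characteristic, every nontrivial additive character `ψ` and every nontrivial multiplicative
character `χ`, the Rudnick sum `E(χ)` is real and satisfies `|E(χ)| ≤ 2`. -/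
theorem rudnickSum_real_and_bounded
    {F : Type*} [Field F] [Fintype F] (hchar : ringChar F ≠ 2)
    (ψ : AddChar F ℂ) (hψ : ψ ≠ 1) (χ : Fˣ →* ℂˣ) (hχ : χ ≠ 1) :
    (starRingEnd ℂ) (rudnickSum ψ χ) = rudnickSum ψ χ ∧ ‖rudnickSum ψ χ‖ ≤ 2 := by
  have hχ' : MulChar.ofUnitHom χ ≠ 1 := fun h => hχ <| MonoidHom.ext fun x => Units.ext <| by
    rw [← MulChar.ofUnitHom_coe, h, MulChar.one_apply_coe, MonoidHom.one_apply, Units.val_one]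
  rw [RudnickSum.rudnickSum_eq_normalizedCayleySum (Ring.two_ne_zero hchar)]
  exact ⟨RudnickSum.conj_normalizedCayleySum ψ _,
    RudnickSum.norm_normalizedCayleySum_le_two hchar hψ hχ'⟩
end
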